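/- arXiv:math/0702066 — 9 statements merged into one kernel-verified Lean document; each statement's English description precedes it below -/
import Mathlib

section
/- For all integers n ≥ 1 and d ≥ 1 there is a constant C(d,n) such that the following holds. Let P(x) = Σ_{|I| ≤ d} c_I x^I be a real polynomial in n variables of total degree at most d (written in multi-index notation), not identically zero, and set M = max_I |c_I|. Then for every δ > 0, the Lebesgue measure of the set {x ∈ ℝⁿ : |x| ≤ 1 and |P(x)| ≤ δ} is at most C(d,n)·(δ/M)^{1/dⁿ}. -/
open MeasureTheory Set

theorem Polynomial.abs_coeff_mul_X_sub_C_le {p : Polynomial ℝ} {B a : ℝ}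
    (hp : ∀ k, |p.coeff k| ≤ B) (ha : |a| ≤ 1) (k : ℕ) :
    |(p * (X - C a)).coeff k| ≤ 2 * B := by
  have hmul : ∀ j, |p.coeff j * a| ≤ B := fun j => by
    rw [abs_mul]
    exact (mul_le_of_le_one_right (abs_nonneg _) ha).trans (hp j)
  cases k with
  | zero =>
    have := hmul 0
    have := abs_nonneg (p.coeff 0 * a)
    simp only [mul_coeff_zero, coeff_sub, coeff_X_zero, coeff_C_zero, zero_sub, mul_neg, abs_neg]
    linarith
  | succ k =>
    rw [coeff_mul_X_sub_C]
    linarith [abs_sub (p.coeff k) (p.coeff (k + 1) * a), hp k, hmul (k + 1)]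

theorem Lagrange.abs_coeff_prod_basisDivisor_le {r x : ℝ} (hr : 0 < r) (s : Finset ℝ)
    (hs : ∀ y ∈ s, |y| ≤ 1) (hsep : ∀ y ∈ s, r ≤ |x - y|) (k : ℕ) :
    |(∏ y ∈ s, Lagrange.basisDivisor x y).coeff k| ≤ (2 / r) ^ s.card := by
  induction s using Finset.induction_on generalizing k with
  | empty =>
    rw [Finset.prod_empty, Polynomial.coeff_one]
    split_ifs <;> simp
  | insert y s hy ih =>
    have ih := ih (fun z hz => hs z (Finset.mem_insert_of_mem hz))
      (fun z hz => hsep z (Finset.mem_insert_of_mem hz))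
    have hxy := hsep y (Finset.mem_insert_self _ _)
    rw [Finset.prod_insert hy, Finset.card_insert_of_notMem hy, Lagrange.basisDivisor, mul_assoc,
      Polynomial.coeff_C_mul, mul_comm (Polynomial.X - _), abs_mul, abs_inv]
    calc |x - y|⁻¹ * |((∏ y ∈ s, Lagrange.basisDivisor x y) *
            (Polynomial.X - Polynomial.C y)).coeff k|
        ≤ r⁻¹ * (2 * (2 / r) ^ s.card) := by
          gcongr
          exact Polynomial.abs_coeff_mul_X_sub_C_le ih (hs y (Finset.mem_insert_self _ _)) k
      _ = (2 / r) ^ (s.card + 1) := by rw [pow_succ]; ring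

theorem Polynomial.abs_coeff_le_of_separated {p : Polynomial ℝ} {r δ : ℝ} (hr : 0 < r)
    (hδ : 0 ≤ δ) {s : Finset ℝ} (hdeg : p.degree < s.card) (hs : ∀ x ∈ s, |x| ≤ 1)
    (hsep : (s : Set ℝ).Pairwise fun x y => r ≤ |x - y|) (hp : ∀ x ∈ s, |p.eval x| ≤ δ) (k : ℕ) :
    |p.coeff k| ≤ s.card * (δ * (2 / r) ^ (s.card - 1)) := by
  rw [Lagrange.eq_interpolate (v := id) (Function.injective_id.injOn) hdeg,
    Lagrange.interpolate_apply, finsetSum_coeff, ← nsmul_eq_mul]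
  refine (Finset.abs_sum_le_sum_abs _ _).trans (Finset.sum_le_card_nsmul _ _ _ fun x hx => ?_)
  rw [coeff_C_mul, abs_mul, ← Finset.card_erase_of_mem hx]
  refine mul_le_mul (hp x hx) ?_ (abs_nonneg _) hδ
  exact Lagrange.abs_coeff_prod_basisDivisor_le hr _ (fun y hy => hs y (Finset.mem_of_mem_erase hy))
    (fun y hy => hsep hx (Finset.mem_of_mem_erase hy) (Finset.ne_of_mem_erase hy).symm) k

theorem Real.exists_separated_finset_of_lt_volume {E : Set ℝ} {r : ℝ} (hr : 0 < r) (m : ℕ)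
    (hE : ENNReal.ofReal (2 * r * m) < volume E) :
    ∃ s : Finset ℝ, s.card = m + 1 ∧ (s : Set ℝ) ⊆ E ∧
      (s : Set ℝ).Pairwise fun x y => r ≤ |x - y| := by
  have key : ∀ s : Finset ℝ, s.card ≤ m → ∃ x ∈ E, ∀ y ∈ s, r ≤ |x - y| := by
    intro s hs
    by_contra! h
    refine hE.not_ge ?_
    calc volume E ≤ volume (⋃ y ∈ s, Metric.ball y r) := measure_mono fun x hx => by
            obtain ⟨y, hy, hxy⟩ := h x hx
            exact mem_biUnion hy (by rwa [Metric.mem_ball, Real.dist_eq])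
      _ ≤ ∑ y ∈ s, volume (Metric.ball y r) := measure_biUnion_finset_le _ _
      _ = ENNReal.ofReal (2 * r * s.card) := by
            simp only [Real.volume_ball, Finset.sum_const, nsmul_eq_mul]
            rw [mul_comm, ENNReal.ofReal_mul (by positivity : 0 ≤ 2 * r), ENNReal.ofReal_natCast]
      _ ≤ ENNReal.ofReal (2 * r * m) := by gcongr
  have main : ∀ j ≤ m + 1, ∃ s : Finset ℝ, s.card = j ∧ (s : Set ℝ) ⊆ E ∧
      (s : Set ℝ).Pairwise fun x y => r ≤ |x - y| := by
    intro j
    induction j with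
    | zero => exact fun _ => ⟨∅, by simp⟩
    | succ j ih =>
      intro hj
      obtain ⟨s, hcard, hsE, hsep⟩ := ih (by omega)
      obtain ⟨x, hx, hxs⟩ := key s (by omega)
      have hxs' : x ∉ s := fun h => by
        have := hxs x h
        simp only [sub_self, abs_zero] at this
        linarith
      refine ⟨insert x s, ?_, ?_, ?_⟩
      · rw [Finset.card_insert_of_notMem hxs', hcard]
      · simpa [insert_subset_iff] using ⟨hx, hsE⟩
      · rw [Finset.coe_insert]
        refine hsep.insert fun y hy _ => ⟨hxs y hy, ?_⟩
        rw [abs_sub_comm]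
        exact hxs y hy
  exact main (m + 1) le_rfl

theorem Polynomial.volume_sublevel_Icc_le {d : ℕ} (hd : d ≠ 0) {p : Polynomial ℝ}
    (hdeg : p.natDegree ≤ d) {k : ℕ} {η δ : ℝ} (hη : 0 < η) (hk : η ≤ |p.coeff k|) (hδ : 0 < δ) :
    volume {t : ℝ | t ∈ Icc (-1) 1 ∧ |p.eval t| ≤ δ} ≤
      ENNReal.ofReal (4 * d * (d + 2) * (δ / η) ^ ((1 : ℝ) / d)) := by
  set u : ℝ := (δ / η) ^ ((1 : ℝ) / d) with hu
  have hupos : 0 < u := by positivity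
  have hud : u ^ d = δ / η := by
    rw [hu, one_div, Real.rpow_inv_natCast_pow (by positivity) hd]
  by_contra! h
  have hr : 0 < 2 * (d + 2) * u := by positivity
  obtain ⟨s, hcard, hsE, hsep⟩ := Real.exists_separated_finset_of_lt_volume hr d
    (E := {t : ℝ | t ∈ Icc (-1) 1 ∧ |p.eval t| ≤ δ}) (by convert h using 2; ring)
  have hcoeff := abs_coeff_le_of_separated hr hδ.le (p := p) (s := s)
    (by
      rw [hcard]
      exact (degree_le_of_natDegree_le hdeg).trans_lt (by exact_mod_cast d.lt_succ_self))
    (fun x hx => abs_le.2 (hsE hx).1) hsep (fun x hx => (hsE hx).2) k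
  rw [hcard, Nat.add_sub_cancel] at hcoeff
  have h1 : (2 / (2 * ((d : ℝ) + 2) * u)) ^ d = (1 / ((d : ℝ) + 2)) ^ d * (η / δ) := by
    rw [← inv_div δ η, ← hud, ← inv_pow, ← mul_pow]
    congr 1
    field_simp
  have h2 : (1 / ((d : ℝ) + 2)) ^ d ≤ 1 / ((d : ℝ) + 2) :=
    pow_le_of_le_one (by positivity)
      (by rw [div_le_one (by positivity)]; linarith [d.cast_nonneg (α := ℝ)]) hd
  have h3 : ((d + 1 : ℕ) : ℝ) * (δ * (2 / (2 * ((d : ℝ) + 2) * u)) ^ d) < η := by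
    calc ((d + 1 : ℕ) : ℝ) * (δ * (2 / (2 * ((d : ℝ) + 2) * u)) ^ d)
        ≤ ((d + 1 : ℕ) : ℝ) * (δ * (1 / ((d : ℝ) + 2) * (η / δ))) := by rw [h1]; gcongr
      _ = ((d : ℝ) + 1) / (d + 2) * η := by push_cast; field_simp
      _ < 1 * η := by
          gcongr
          rw [div_lt_one (by positivity)]
          linarith
      _ = η := one_mul η
  linarith

/-- Slicing a subset of the cube `[-1, 1]ⁿ⁺¹` in the `i`-th direction: slices over `B` have length
at most `2`, the others at most `K`. -/
theorem volume_le_of_slices {n : ℕ} (i : Fin (n + 1)) {E : Set (Fin (n + 1) → ℝ)}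
    (hE : MeasurableSet E) (hbox : E ⊆ Icc (-1) 1) {B : Set (Fin n → ℝ)} (hB : MeasurableSet B)
    {K : ENNReal} (hK : ∀ y ∈ Icc (-1 : Fin n → ℝ) 1, y ∉ B →
      volume {t : ℝ | (i.insertNth t y : Fin (n + 1) → ℝ) ∈ E} ≤ K) :
    volume E ≤ 2 * volume B + 2 ^ n * K := by
  have hmp := (volume_preserving_piFinSuccAbove (fun _ : Fin (n + 1) => ℝ) i).symm
  rw [← hmp.measure_preimage_equiv, Measure.volume_eq_prod,
    Measure.prod_apply_symm ((MeasurableEquiv.measurable _) hE)]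
  have hvol : volume (Icc (-1 : Fin n → ℝ) 1) = 2 ^ n := by
    rw [Real.volume_Icc_pi]
    norm_num
  calc ∫⁻ y, volume ((fun t => (t, y)) ⁻¹'
          ((MeasurableEquiv.piFinSuccAbove (fun _ => ℝ) i).symm ⁻¹' E))
      ≤ ∫⁻ y, B.indicator (fun _ => 2) y + (Icc (-1 : Fin n → ℝ) 1).indicator (fun _ => K) y := by
        refine lintegral_mono fun y => ?_
        change volume {t : ℝ | (i.insertNth t y : Fin (n + 1) → ℝ) ∈ E} ≤ _
        have hmem : ∀ t : ℝ, (i.insertNth t y : Fin (n + 1) → ℝ) ∈ E →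
            t ∈ Icc (-1 : ℝ) 1 ∧ y ∈ Icc (-1 : Fin n → ℝ) 1 := fun t ht => by
          have h := hbox ht
          refine ⟨⟨by simpa using h.1 i, by simpa using h.2 i⟩, fun j => ?_, fun j => ?_⟩
          · simpa using h.1 (i.succAbove j)
          · simpa using h.2 (i.succAbove j)
        by_cases hyB : y ∈ B
        · rw [indicator_of_mem hyB]
          refine le_add_right ((measure_mono fun t ht => (hmem t ht).1).trans ?_)
          rw [Real.volume_Icc]
          norm_num
        · by_cases hy : y ∈ Icc (-1 : Fin n → ℝ) 1
          · rw [indicator_of_mem hy]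
            exact le_add_left (hK y hy hyB)
          · have : {t : ℝ | (i.insertNth t y : Fin (n + 1) → ℝ) ∈ E} = ∅ :=
              eq_empty_of_forall_notMem fun t ht => hy (hmem t ht).2
            simp [this]
    _ = 2 * volume B + 2 ^ n * K := by
        rw [lintegral_add_left (measurable_const.indicator hB), lintegral_indicator_const hB,
          lintegral_indicator_const measurableSet_Icc, hvol, mul_comm K]

theorem Finsupp.exists_eq_single_one_of_degree_eq_one {σ : Type*} (I : σ →₀ ℕ)
    (h : I.degree = 1) : ∃ i, I = Finsupp.single i 1 := by
  have hI : I ≠ 0 := by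
    rintro rfl
    simp at h
  obtain ⟨i, hi⟩ := Finsupp.ne_iff.1 hI
  have hle : Finsupp.single i 1 ≤ I := by
    rw [Finsupp.single_le_iff]
    exact Nat.one_le_iff_ne_zero.2 hi
  obtain ⟨J, rfl⟩ := exists_add_of_le hle
  rw [map_add, Finsupp.degree_single, Nat.add_eq_left, Finsupp.degree_eq_zero_iff] at h
  exact ⟨i, by rw [h, add_zero]⟩

namespace MvPolynomial

theorem measurableSet_sublevel_Icc {n : ℕ} (P : MvPolynomial (Fin n) ℝ) (δ : ℝ) :
    MeasurableSet {x : Fin n → ℝ | x ∈ Icc (-1) 1 ∧ |eval x P| ≤ δ} :=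
  measurableSet_Icc.inter
    (isClosed_le (continuous_eval P).abs continuous_const).measurableSet

theorem volume_sublevel_Icc_le_two_pow {n : ℕ} (P : MvPolynomial (Fin n) ℝ) (δ : ℝ) :
    volume {x : Fin n → ℝ | x ∈ Icc (-1) 1 ∧ |eval x P| ≤ δ} ≤ ENNReal.ofReal (2 ^ n) := by
  refine (measure_mono fun x hx => hx.1 : _ ≤ volume (Icc (-1 : Fin n → ℝ) 1)).trans ?_
  rw [Real.volume_Icc_pi]
  norm_num

theorem volume_sublevel_Icc_succ_le {n d : ℕ} (hd : d ≠ 0) {P : MvPolynomial (Fin (n + 1)) ℝ}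
    (hP : P.totalDegree ≤ d) (k : ℕ) {η δ : ℝ} (hη : 0 < η) (hδ : 0 < δ) :
    volume {x : Fin (n + 1) → ℝ | x ∈ Icc (-1) 1 ∧ |eval x P| ≤ δ} ≤
      2 * volume {y : Fin n → ℝ | y ∈ Icc (-1) 1 ∧ |eval y ((finSuccEquiv ℝ n P).coeff k)| < η} +
      2 ^ n * ENNReal.ofReal (4 * d * (d + 2) * (δ / η) ^ ((1 : ℝ) / d)) := by
  refine volume_le_of_slices 0 (measurableSet_sublevel_Icc P δ) (fun x hx => hx.1)
    (measurableSet_Icc.inter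
      (isOpen_lt (continuous_eval _).abs continuous_const).measurableSet) fun y hy hyB => ?_
  have hcoeff : η ≤ |(Polynomial.map (eval y) (finSuccEquiv ℝ n P)).coeff k| := by
    rw [Polynomial.coeff_map]
    exact not_lt.1 fun h => hyB ⟨hy, h⟩
  have hdeg : (Polynomial.map (eval y) (finSuccEquiv ℝ n P)).natDegree ≤ d :=
    Polynomial.natDegree_map_le.trans <|
      (natDegree_finSuccEquiv P).trans_le ((degreeOf_le_totalDegree P 0).trans hP)
  refine (measure_mono fun t ht => ?_).trans
    (Polynomial.volume_sublevel_Icc_le hd hdeg hη hcoeff hδ)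
  obtain ⟨hbox, hval⟩ := ht
  rw [Fin.insertNth_zero', eval_eq_eval_mv_eval'] at hval
  exact ⟨⟨by simpa using hbox.1 0, by simpa using hbox.2 0⟩, hval⟩

theorem totalDegree_coeff_finSuccEquiv_le {R : Type*} [CommSemiring R] {n : ℕ}
    (P : MvPolynomial (Fin (n + 1)) R) (k : ℕ) :
    ((finSuccEquiv R n P).coeff k).totalDegree ≤ P.totalDegree := by
  by_cases h : (finSuccEquiv R n P).coeff k = 0
  · simp [h]
  · exact (Nat.le_add_right _ k).trans (totalDegree_coeff_finSuccEquiv_add_le P k h)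

theorem coeff_tail_coeff_finSuccEquiv {R : Type*} [CommSemiring R] {n : ℕ}
    (P : MvPolynomial (Fin (n + 1)) R) (I : Fin (n + 1) →₀ ℕ) :
    coeff I.tail ((finSuccEquiv R n P).coeff (I 0)) = coeff I P := by
  rw [finSuccEquiv_coeff_coeff, Finsupp.cons_tail]

theorem exists_volume_sublevel_Icc_le_of_two_le {d : ℕ} (hd : 2 ≤ d) (n : ℕ) :
    ∃ C : ℝ, 0 ≤ C ∧ ∀ P : MvPolynomial (Fin (n + 1)) ℝ, P.totalDegree ≤ d →
      ∀ I, ∀ M : ℝ, 0 < M → M ≤ |coeff I P| → ∀ δ : ℝ, 0 < δ →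
        volume {x : Fin (n + 1) → ℝ | x ∈ Icc (-1) 1 ∧ |eval x P| ≤ δ} ≤
          ENNReal.ofReal (C * (δ / M) ^ ((1 : ℝ) / (d : ℝ) ^ (n + 1))) := by
  have hd0 : d ≠ 0 := by omega
  induction n with
  | zero =>
    refine ⟨4 * d * (d + 2), by positivity, fun P hP I M hM hI δ hδ => ?_⟩
    refine (volume_sublevel_Icc_succ_le hd0 hP (I 0) hM hδ).trans ?_
    have hempty : {y : Fin 0 → ℝ | y ∈ Icc (-1) 1 ∧
        |eval y ((finSuccEquiv ℝ 0 P).coeff (I 0))| < M} = ∅ := by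
      refine eq_empty_of_forall_notMem fun y hy => hy.2.not_ge ?_
      rw [eq_C_of_isEmpty ((finSuccEquiv ℝ 0 P).coeff (I 0)), eval_C,
        Subsingleton.elim 0 I.tail, coeff_tail_coeff_finSuccEquiv]
      exact hI
    rw [hempty]
    simp
  | succ n ih =>
    obtain ⟨C, hC, ih⟩ := ih
    refine ⟨2 * C + 2 ^ (n + 2) * (4 * d * (d + 2)), by positivity, fun P hP I M hM hI δ hδ => ?_⟩
    have hd1 : (2 : ℝ) ≤ d := by exact_mod_cast hd
    have ht : 0 < δ / M := by positivity
    set t := δ / M with ht_def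
    rcases le_total 1 t with h1 | h1
    · refine (volume_sublevel_Icc_le_two_pow P δ).trans (ENNReal.ofReal_le_ofReal ?_)
      have h2 : 1 ≤ t ^ ((1 : ℝ) / (d : ℝ) ^ (n + 1 + 1)) := Real.one_le_rpow h1 (by positivity)
      calc (2 : ℝ) ^ (n + 1 + 1) ≤ (2 * C + 2 ^ (n + 2) * (4 * d * (d + 2))) * 1 := by
            have : (1 : ℝ) ≤ 4 * d * (d + 2) := by nlinarith
            have : (2 : ℝ) ^ (n + 2) * 1 ≤ 2 ^ (n + 2) * (4 * d * (d + 2)) := by gcongr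
            linarith
        _ ≤ _ := by gcongr
    · have hη : 0 < M * t ^ ((1 : ℝ) / d) := by positivity
      refine (volume_sublevel_Icc_succ_le hd0 hP (I 0) hη hδ).trans ?_
      have hB : volume {y : Fin (n + 1) → ℝ | y ∈ Icc (-1) 1 ∧
          |eval y ((finSuccEquiv ℝ (n + 1) P).coeff (I 0))| < M * t ^ ((1 : ℝ) / d)} ≤
          ENNReal.ofReal (C * t ^ ((1 : ℝ) / (d : ℝ) ^ (n + 1 + 1))) := by
        refine (measure_mono (ofPred_subset_ofPred.2 fun y hy => ⟨hy.1, hy.2.le⟩)).trans <|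
          (ih _ ((totalDegree_coeff_finSuccEquiv_le P (I 0)).trans hP) I.tail M hM
            (by rwa [coeff_tail_coeff_finSuccEquiv]) _ hη).trans_eq ?_
        rw [mul_div_cancel_left₀ _ hM.ne', ← Real.rpow_mul ht.le, pow_succ _ (n + 1)]
        congr 3
        field_simp
      have hK : (δ / (M * t ^ ((1 : ℝ) / d))) ^ ((1 : ℝ) / d) ≤
          t ^ ((1 : ℝ) / (d : ℝ) ^ (n + 1 + 1)) := by
        rw [← div_div, ← ht_def, ← Real.rpow_one_sub' ht.le, ← Real.rpow_mul ht.le]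
        · refine Real.rpow_le_rpow_of_exponent_ge ht h1 ?_
          have h2 : (2 : ℝ) ≤ d ^ (n + 1) := hd1.trans (le_self_pow₀ (by linarith) (by omega))
          have h3 : (1 : ℝ) / d ^ (n + 1) ≤ 1 - 1 / d := by
            have := one_div_le_one_div_of_le two_pos h2
            have := one_div_le_one_div_of_le two_pos hd1
            linarith
          calc (1 : ℝ) / d ^ (n + 1 + 1) = 1 / d ^ (n + 1) * (1 / d) := by
                rw [pow_succ _ (n + 1)]
                field_simp
            _ ≤ _ := by gcongr
        · have := one_div_le_one_div_of_le two_pos hd1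
          linarith
      have h2n : (2 : ENNReal) ^ (n + 1) = ENNReal.ofReal (2 ^ (n + 1)) := by
        rw [ENNReal.ofReal_pow two_pos.le, ENNReal.ofReal_ofNat]
      calc _ ≤ 2 * ENNReal.ofReal (C * t ^ ((1 : ℝ) / (d : ℝ) ^ (n + 1 + 1))) + 2 ^ (n + 1) *
            ENNReal.ofReal (4 * d * (d + 2) * t ^ ((1 : ℝ) / (d : ℝ) ^ (n + 1 + 1))) := by gcongr
        _ = ENNReal.ofReal ((2 * C + 2 ^ (n + 1) * (4 * d * (d + 2))) *
              t ^ ((1 : ℝ) / (d : ℝ) ^ (n + 1 + 1))) := by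
            rw [h2n, ← ENNReal.ofReal_ofNat 2, ← ENNReal.ofReal_mul (by positivity),
              ← ENNReal.ofReal_mul (by positivity),
              ← ENNReal.ofReal_add (by positivity) (by positivity)]
            congr 1
            ring
        _ ≤ _ := by
            gcongr
            · norm_num
            · omega

theorem eval_eq_of_totalDegree_le_one {R σ : Type*} [CommSemiring R] [Fintype σ]
    {P : MvPolynomial σ R} (hP : P.totalDegree ≤ 1) (x : σ → R) :
    eval x P = coeff 0 P + ∑ i, coeff (Finsupp.single i 1) P * x i := by
  classical
  suffices P = C (coeff 0 P) + ∑ i, C (coeff (Finsupp.single i 1) P) * X i by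
    conv_lhs => rw [this]
    simp
  ext I
  rw [coeff_add, coeff_sum]
  simp only [coeff_C, coeff_C_mul, coeff_X]
  rcases Nat.lt_or_ge 1 I.degree with h | h
  · rw [coeff_eq_zero_of_totalDegree_lt (hP.trans_lt h), if_neg, zero_add, eq_comm]
    · refine Finset.sum_eq_zero fun i _ => ?_
      rw [if_neg, mul_zero]
      rintro rfl
      simp at h
    · rintro rfl
      simp at h
  · rcases Nat.le_one_iff_eq_zero_or_eq_one.1 h with h | h
    · obtain rfl := (Finsupp.degree_eq_zero_iff I).1 h
      simp
    · obtain ⟨i, rfl⟩ := I.exists_eq_single_one_of_degree_eq_one h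
      have h0 : (0 : σ →₀ ℕ) ≠ Finsupp.single i 1 := by simp [eq_comm]
      simp [Finsupp.single_left_inj, h0]

theorem volume_sublevel_Icc_le_of_coeff_single {n : ℕ} {P : MvPolynomial (Fin (n + 1)) ℝ}
    (hP : P.totalDegree ≤ 1) {i : Fin (n + 1)} {η δ : ℝ} (hη : 0 < η)
    (hi : η ≤ |coeff (Finsupp.single i 1) P|) (hδ : 0 < δ) :
    volume {x : Fin (n + 1) → ℝ | x ∈ Icc (-1) 1 ∧ |eval x P| ≤ δ} ≤
      ENNReal.ofReal (2 ^ n * 12 * (δ / η)) := by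
  have hslice := volume_le_of_slices i (measurableSet_sublevel_Icc P δ) (fun x hx => hx.1)
    (B := ∅) MeasurableSet.empty (K := ENNReal.ofReal (12 * (δ / η))) fun y hy _ => by
      let b : ℝ := coeff 0 P + ∑ j, coeff (Finsupp.single (i.succAbove j) 1) P * y j
      let p : Polynomial ℝ :=
        Polynomial.C (coeff (Finsupp.single i 1) P) * Polynomial.X + Polynomial.C b
      have hcoeff : η ≤ |p.coeff 1| := by simpa [p, Polynomial.coeff_C] using hi
      have h := Polynomial.volume_sublevel_Icc_le one_ne_zero
        (Polynomial.natDegree_linear_le : p.natDegree ≤ 1) hη hcoeff hδ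
      refine (measure_mono fun t ht => ?_).trans (h.trans_eq (by norm_num))
      obtain ⟨hbox, hval⟩ := ht
      rw [eval_eq_of_totalDegree_le_one hP, Fin.sum_univ_succAbove _ i] at hval
      simp only [Fin.insertNth_apply_same, Fin.insertNth_apply_succAbove] at hval
      refine ⟨⟨by simpa using hbox.1 i, by simpa using hbox.2 i⟩, ?_⟩
      simp only [b, Polynomial.eval_add, Polynomial.eval_mul, Polynomial.eval_C,
        Polynomial.eval_X]
      convert hval using 2
      ring
  refine hslice.trans_eq ?_
  rw [measure_empty, mul_zero, zero_add, mul_assoc, ENNReal.ofReal_mul (p := 2 ^ n) (by positivity),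
    ENNReal.ofReal_pow two_pos.le, ENNReal.ofReal_ofNat]

theorem volume_sublevel_Icc_le_of_totalDegree_le_one {n : ℕ} {P : MvPolynomial (Fin (n + 1)) ℝ}
    (hP : P.totalDegree ≤ 1) {I : Fin (n + 1) →₀ ℕ} {M δ : ℝ} (hM : 0 < M)
    (hI : M ≤ |coeff I P|) (hδ : 0 < δ) :
    volume {x : Fin (n + 1) → ℝ | x ∈ Icc (-1) 1 ∧ |eval x P| ≤ δ} ≤
      ENNReal.ofReal (2 ^ n * 24 * (n + 1) * (δ / M)) := by
  by_cases h : ∃ i, M / (2 * (n + 1)) ≤ |coeff (Finsupp.single i 1) P|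
  · obtain ⟨i, hi⟩ := h
    refine (volume_sublevel_Icc_le_of_coeff_single hP (by positivity) hi hδ).trans_eq ?_
    congr 1
    field_simp
    ring
  push Not at h
  have hsmall : M / (2 * (n + 1)) ≤ M := div_le_self hM.le (by linarith [n.cast_nonneg (α := ℝ)])
  have hI0 : I = 0 := by
    by_contra hI0
    have hdeg : I.degree ≤ 1 := by
      by_contra! hlt
      rw [coeff_eq_zero_of_totalDegree_lt (hP.trans_lt hlt), abs_zero] at hI
      linarith
    rcases Nat.le_one_iff_eq_zero_or_eq_one.1 hdeg with hdeg | hdeg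
    · exact hI0 ((Finsupp.degree_eq_zero_iff I).1 hdeg)
    · obtain ⟨i, rfl⟩ := I.exists_eq_single_one_of_degree_eq_one hdeg
      linarith [h i]
  subst hI0
  rcases le_or_gt (M / 2) δ with hMδ | hMδ
  · refine (volume_sublevel_Icc_le_two_pow P δ).trans (ENNReal.ofReal_le_ofReal ?_)
    have h1 : 1 / 2 ≤ δ / M := by rw [div_le_div_iff₀ two_pos hM]; linarith
    calc (2 : ℝ) ^ (n + 1) = 2 ^ n * 4 * 1 * (1 / 2) := by rw [pow_succ]; ring
      _ ≤ 2 ^ n * 24 * (n + 1) * (δ / M) := by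
        gcongr
        · norm_num
        · linarith [n.cast_nonneg (α := ℝ)]
  · rw [show {x : Fin (n + 1) → ℝ | x ∈ Icc (-1) 1 ∧ |eval x P| ≤ δ} = ∅ from ?_]
    · simp
    refine eq_empty_of_forall_notMem fun x ⟨hx, hval⟩ => ?_
    rw [eval_eq_of_totalDegree_le_one hP] at hval
    have hsum : |∑ i, coeff (Finsupp.single i 1) P * x i| ≤ M / 2 := by
      calc |∑ i, coeff (Finsupp.single i 1) P * x i|
          ≤ ∑ i, |coeff (Finsupp.single i 1) P * x i| := Finset.abs_sum_le_sum_abs _ _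
        _ ≤ ∑ _i : Fin (n + 1), M / (2 * (n + 1)) := Finset.sum_le_sum fun i _ => by
            rw [abs_mul]
            exact (mul_le_of_le_one_right (abs_nonneg _) (abs_le.2 ⟨hx.1 i, hx.2 i⟩)).trans (h i).le
        _ = M / 2 := by
            simp only [Finset.sum_const, Finset.card_univ, Fintype.card_fin, nsmul_eq_mul]
            push_cast
            field_simp
    linarith [abs_sub_abs_le_abs_add (coeff 0 P) (∑ i, coeff (Finsupp.single i 1) P * x i)]

theorem exists_volume_sublevel_Icc_le {d : ℕ} (hd : 1 ≤ d) (n : ℕ) :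
    ∃ C : ℝ, ∀ P : MvPolynomial (Fin (n + 1)) ℝ, P.totalDegree ≤ d →
      ∀ I, ∀ M : ℝ, 0 < M → M ≤ |coeff I P| → ∀ δ : ℝ, 0 < δ →
        volume {x : Fin (n + 1) → ℝ | x ∈ Icc (-1) 1 ∧ |eval x P| ≤ δ} ≤
          ENNReal.ofReal (C * (δ / M) ^ ((1 : ℝ) / (d : ℝ) ^ (n + 1))) := by
  rcases hd.eq_or_lt with rfl | hd
  · refine ⟨2 ^ n * 24 * (n + 1), fun P hP I M hM hI δ hδ => ?_⟩
    simpa using volume_sublevel_Icc_le_of_totalDegree_le_one hP hM hI hδ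
  · obtain ⟨C, -, hC⟩ := exists_volume_sublevel_Icc_le_of_two_le hd n
    exact ⟨C, hC⟩

end MvPolynomial

/-- For all `n ≥ 1`, `d ≥ 1` there is `C(d,n)` such that: if
`P(x) = ∑_{|I| ≤ d} c_I x^I` is a nonzero real polynomial in `n` variables of total
degree at most `d`, and `M = max_I |c_I|`, then for every `δ > 0` the Lebesgue measure
of `{x : |x| ≤ 1, |P(x)| ≤ δ}` is at most `C(d,n) (δ/M)^{1/dⁿ}`. -/
theorem stmt1 (n d : ℕ) (hn : 1 ≤ n) (hd : 1 ≤ d) :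
    ∃ C : ℝ, ∀ P : MvPolynomial (Fin n) ℝ, P ≠ 0 → P.totalDegree ≤ d →
      ∀ M : ℝ, IsGreatest {r : ℝ | ∃ I : Fin n →₀ ℕ, r = |MvPolynomial.coeff I P|} M →
      ∀ δ : ℝ, 0 < δ →
        MeasureTheory.volume
            {x : EuclideanSpace ℝ (Fin n) | ‖x‖ ≤ 1 ∧
              |MvPolynomial.eval (fun j => x j) P| ≤ δ}
          ≤ ENNReal.ofReal (C * (δ / M) ^ ((1 : ℝ) / ((d : ℝ) ^ n))) := by
  obtain ⟨m, rfl⟩ : ∃ m, n = m + 1 := ⟨n - 1, by omega⟩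
  obtain ⟨C, hC⟩ := MvPolynomial.exists_volume_sublevel_Icc_le hd m
  refine ⟨C, fun P hP0 hP M hM δ hδ => ?_⟩
  obtain ⟨I, rfl⟩ := hM.1
  have hMpos : 0 < |MvPolynomial.coeff I P| := by
    obtain ⟨J, hJ⟩ := MvPolynomial.ne_zero_iff.1 hP0
    exact (abs_pos.2 hJ).trans_le (hM.2 ⟨J, rfl⟩)
  refine le_trans ?_ (hC P hP I _ hMpos le_rfl δ hδ)
  rw [← (PiLp.volume_preserving_ofLp (Fin (m + 1))).measure_preimage
    (MvPolynomial.measurableSet_sublevel_Icc P δ).nullMeasurableSet]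
  refine measure_mono fun x hx => ⟨⟨fun i => ?_, fun i => ?_⟩, hx.2⟩
  · exact (abs_le.1 ((PiLp.norm_apply_le x i).trans hx.1)).1
  · exact (abs_le.1 ((PiLp.norm_apply_le x i).trans hx.1)).2
end

section
/- For every integer d ≥ 1 there is a constant c(d) > 0 such that the following holds. Let P(x) = Σ_{i=0}^d c_i x^i be a real polynomial of degree at most d in one variable with max_{1 ≤ i ≤ d} |c_i| ≥ 1. Then for every closed interval [a,b] ⊆ [−1,1] with a < b, the oscillation of P on [a,b], namely sup_{x ∈ [a,b]} P(x) − inf_{x ∈ [a,b]} P(x), is at least c(d)·(b−a)^d. -/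
open Polynomial Finset

/-- Every coefficient of a product of linear factors `u j * (X - v j)` with `|v j| ≤ 1` and
`|u j| ≤ M` is at most `(2 * M) ^ #s` in absolute value. -/
lemma abs_coeff_prod_linear_le {ι : Type*} [DecidableEq ι] (s : Finset ι) (u v : ι → ℝ) {M : ℝ}
    (hu : ∀ j ∈ s, |u j| ≤ M) (hv : ∀ j ∈ s, |v j| ≤ 1) (i : ℕ) :
    |(∏ j ∈ s, (C (u j) * (X - C (v j)))).coeff i| ≤ (2 * M) ^ #s := by
  induction s using Finset.induction_on generalizing i with
  | empty =>
    simp only [prod_empty, card_empty, pow_zero, coeff_one]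
    split_ifs <;> simp
  | insert k s hk ih =>
    have ih' := ih (fun j hj => hu j (mem_insert_of_mem hj))
      (fun j hj => hv j (mem_insert_of_mem hj))
    have huk := hu k (mem_insert_self k s)
    have hvk := hv k (mem_insert_self k s)
    rw [prod_insert hk, card_insert_of_notMem hk]
    set p := ∏ j ∈ s, (C (u j) * (X - C (v j)))
    set B := (2 * M) ^ #s
    have hB : 0 ≤ B := (abs_nonneg _).trans (ih' 0)
    have hlow : |v k * p.coeff i| ≤ B := by
      rw [abs_mul]
      exact (mul_le_of_le_one_left (abs_nonneg _) hvk).trans (ih' i)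
    have hshift : |(X * p).coeff i| ≤ B := by
      cases i with
      | zero => simpa using hB
      | succ n => simpa [coeff_X_mul] using ih' n
    have hsub : |(X * p).coeff i - v k * p.coeff i| ≤ 2 * B :=
      (abs_sub _ _).trans (by linarith)
    rw [mul_assoc, coeff_C_mul, sub_mul, coeff_sub, coeff_C_mul, abs_mul]
    calc |u k| * |(X * p).coeff i - v k * p.coeff i| ≤ M * (2 * B) :=
          mul_le_mul huk hsub (abs_nonneg _) ((abs_nonneg _).trans huk)
      _ = (2 * M) ^ (#s + 1) := by rw [pow_succ]; ring

/-- A polynomial of degree at most `d` which is at most `K` in absolute value on `[a, b] ⊆ [-1, 1]`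
has coefficients at most `(d + 1) * K * (2 * d / (b - a)) ^ d` in absolute value. -/
lemma abs_coeff_le_of_abs_eval_le {d : ℕ} (hd : 1 ≤ d) {Q : ℝ[X]} (hQ : Q.natDegree ≤ d)
    {a b K : ℝ} (ha : -1 ≤ a) (hab : a < b) (hb : b ≤ 1)
    (hK : ∀ x ∈ Set.Icc a b, |Q.eval x| ≤ K) (i : ℕ) :
    |Q.coeff i| ≤ (d + 1) * K * (2 * (d / (b - a))) ^ d := by
  have hd0 : (0 : ℝ) < d := by exact_mod_cast hd
  have hba : 0 < b - a := sub_pos.2 hab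
  let x : ℕ → ℝ := fun k => a + (b - a) / d * k
  have hstep : 0 < (b - a) / d := div_pos hba hd0
  have hx : ∀ k ∈ range (d + 1), x k ∈ Set.Icc a b := by
    intro k hk
    have hkd : (k : ℝ) ≤ d := by exact_mod_cast Nat.lt_succ_iff.1 (mem_range.1 hk)
    have h1 : (b - a) / d * k ≤ (b - a) / d * d := by gcongr
    rw [div_mul_cancel₀ _ hd0.ne'] at h1
    have h2 : 0 ≤ (b - a) / d * k := by positivity
    constructor <;> simp only [x] <;> linarith
  have hdist : ∀ k j : ℕ, k ≠ j → (b - a) / d ≤ |x k - x j| := by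
    intro k j hkj
    have h1 : (1 : ℝ) ≤ |(k : ℝ) - j| := by
      have : (1 : ℤ) ≤ |(k : ℤ) - j| := Int.one_le_abs (by omega)
      exact_mod_cast this
    have h2 : x k - x j = (b - a) / d * ((k : ℝ) - j) := by simp only [x]; ring
    rw [h2, abs_mul, abs_of_pos hstep]
    exact le_mul_of_one_le_right hstep.le h1
  have hinj : Set.InjOn x (range (d + 1)) := by
    intro k _ j _ hkj
    by_contra hne
    have := hdist k j hne
    rw [hkj, sub_self, abs_zero] at this
    linarith
  have hdeg : Q.degree < #(range (d + 1)) := by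
    rw [card_range]
    exact degree_le_natDegree.trans_lt (by exact_mod_cast Nat.lt_succ_of_le hQ)
  have hbasis : ∀ k ∈ range (d + 1),
      |(Lagrange.basis (range (d + 1)) x k).coeff i| ≤ (2 * (d / (b - a))) ^ d := by
    intro k hk
    have h := abs_coeff_prod_linear_le ((range (d + 1)).erase k) (fun j => (x k - x j)⁻¹) x
      (M := d / (b - a)) (fun j hj => ?_) (fun j hj => ?_) i
    · rw [card_erase_of_mem hk, card_range, Nat.add_sub_cancel] at h
      exact h
    · rw [abs_inv, ← inv_div]
      exact inv_anti₀ hstep (hdist k j (ne_of_mem_erase hj).symm)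
    · have := hx j (mem_of_mem_erase hj)
      exact abs_le.2 ⟨ha.trans this.1, this.2.trans hb⟩
  rw [Lagrange.eq_interpolate hinj hdeg, Lagrange.interpolate_apply, finsetSum_coeff]
  calc |∑ k ∈ range (d + 1), (C (Q.eval (x k)) * Lagrange.basis (range (d + 1)) x k).coeff i|
      ≤ ∑ k ∈ range (d + 1), K * (2 * (d / (b - a))) ^ d := by
        refine (abs_sum_le_sum_abs _ _).trans (sum_le_sum fun k hk => ?_)
        rw [coeff_C_mul, abs_mul]
        have h := hK _ (hx k hk)
        exact mul_le_mul h (hbasis k hk) (abs_nonneg _) ((abs_nonneg _).trans h)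
    _ = (d + 1) * K * (2 * (d / (b - a))) ^ d := by
        rw [sum_const, card_range, nsmul_eq_mul]; push_cast; ring

/-- For every `d ≥ 1` there is `c(d) > 0` such that: if `P` is a real
polynomial of degree at most `d` with `max_{1 ≤ i ≤ d} |c_i| ≥ 1`, then for every
interval `[a,b] ⊆ [-1,1]` with `a < b`, the oscillation of `P` on `[a,b]` is at least
`c(d) (b-a)^d`. -/
theorem stmt3 (d : ℕ) (hd : 1 ≤ d) :
    ∃ c : ℝ, 0 < c ∧ ∀ P : Polynomial ℝ, P.natDegree ≤ d →
      (∃ i, 1 ≤ i ∧ i ≤ d ∧ 1 ≤ |P.coeff i|) →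
      ∀ a b : ℝ, -1 ≤ a → a < b → b ≤ 1 →
        c * (b - a) ^ d ≤
          sSup (P.eval '' Set.Icc a b) - sInf (P.eval '' Set.Icc a b) := by
  have hd0 : (0 : ℝ) < d := by exact_mod_cast hd
  refine ⟨1 / ((d + 1) * (2 * d) ^ d), by positivity, ?_⟩
  rintro P hP ⟨i, hi, -, hPi⟩ a b ha hab hb
  have hba : 0 < b - a := sub_pos.2 hab
  have hcomp : IsCompact (P.eval '' Set.Icc a b) := isCompact_Icc.image P.continuous
  set K := sSup (P.eval '' Set.Icc a b) - sInf (P.eval '' Set.Icc a b)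
  have hmem : ∀ x ∈ Set.Icc a b, sInf (P.eval '' Set.Icc a b) ≤ P.eval x ∧
      P.eval x ≤ sSup (P.eval '' Set.Icc a b) := fun x hx =>
    ⟨csInf_le hcomp.bddBelow (Set.mem_image_of_mem _ hx),
      le_csSup hcomp.bddAbove (Set.mem_image_of_mem _ hx)⟩
  have hosc : ∀ x ∈ Set.Icc a b, |(P - C (P.eval a)).eval x| ≤ K := by
    intro x hx
    have h1 := hmem x hx
    have h2 := hmem a (Set.left_mem_Icc.2 hab.le)
    rw [eval_sub, eval_C, abs_le]
    constructor <;> linarith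
  have hcoeff := abs_coeff_le_of_abs_eval_le hd (Q := P - C (P.eval a))
    (by rwa [natDegree_sub_C]) ha hab hb hosc i
  rw [coeff_sub, coeff_C_of_ne_zero (by omega), sub_zero] at hcoeff
  have h := hPi.trans hcoeff
  rw [← mul_div_assoc, div_pow, ← mul_div_assoc, le_div_iff₀ (by positivity), one_mul] at h
  rw [div_mul_eq_mul_div, one_mul, div_le_iff₀ (by positivity)]
  linarith
end

section
/- Let n ≥ 1 be an integer and let r_1, …, r_p be positive real numbers with Σ_{i=1}^p r_iⁿ ≤ 4^{−n}. Then there exist points p_1, …, p_p ∈ ℝⁿ such that the closed balls B(p_i, r_i) are pairwise disjoint and each ball B(p_i, r_i) is contained in the closed unit ball of ℝⁿ. -/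
open MeasureTheory Metric in
/-- Closed balls of nonnegative radii `ρ j` cannot cover a closed ball of radius `R` in `ℝⁿ`
unless `R ^ n ≤ ∑ j, ρ j ^ n`. -/
lemma exists_mem_closedBall_forall_lt_dist {n : ℕ} {ι : Type*} (s : Finset ι)
    (c : ι → EuclideanSpace ℝ (Fin n)) (ρ : ι → ℝ) (hρ : ∀ j ∈ s, 0 ≤ ρ j)
    (x : EuclideanSpace ℝ (Fin n)) {R : ℝ} (hR : 0 ≤ R) (h : ∑ j ∈ s, ρ j ^ n < R ^ n) :
    ∃ y ∈ closedBall x R, ∀ j ∈ s, ρ j < dist y (c j) := by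
  by_contra! hcover
  have hsub : closedBall x R ⊆ ⋃ j ∈ s, closedBall (c j) (ρ j) := fun y hy ↦ by
    simpa using hcover y hy
  set V := volume (ball (0 : EuclideanSpace ℝ (Fin n)) 1)
  have hV0 : V ≠ 0 := (measure_ball_pos _ _ one_pos).ne'
  have hVtop : V ≠ ⊤ := measure_ball_lt_top.ne
  have hvol : ENNReal.ofReal (R ^ n) * V ≤ ENNReal.ofReal (∑ j ∈ s, ρ j ^ n) * V := calc
    ENNReal.ofReal (R ^ n) * V = volume (closedBall x R) := by
      rw [Measure.addHaar_closedBall _ _ hR, finrank_euclideanSpace_fin]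
    _ ≤ ∑ j ∈ s, volume (closedBall (c j) (ρ j)) :=
      (measure_mono hsub).trans (measure_biUnion_finset_le s _)
    _ = ∑ j ∈ s, ENNReal.ofReal (ρ j ^ n) * V := Finset.sum_congr rfl fun j hj ↦ by
      rw [Measure.addHaar_closedBall _ _ (hρ j hj), finrank_euclideanSpace_fin]
    _ = ENNReal.ofReal (∑ j ∈ s, ρ j ^ n) * V := by
      rw [ENNReal.ofReal_sum_of_nonneg fun j hj ↦ pow_nonneg (hρ j hj) n, Finset.sum_mul]
  rw [ENNReal.mul_le_mul_iff_left hV0 hVtop,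
    ENNReal.ofReal_le_ofReal_iff (Finset.sum_nonneg fun j hj ↦ pow_nonneg (hρ j hj) n)] at hvol
  exact h.not_ge hvol

/-- Greedy packing in decreasing order of radii: the centers can be chosen so that the balls
lie in the unit ball and distinct centers are further apart than the sum of the radii. -/
lemma exists_centers_of_sum_pow_le {n : ℕ} (hn : n ≠ 0) {ι : Type*} (s : Finset ι) (r : ι → ℝ)
    (hr : ∀ i ∈ s, 0 < r i) (hsum : ∑ i ∈ s, r i ^ n ≤ ((4 : ℝ) ^ n)⁻¹) :
    ∃ c : ι → EuclideanSpace ℝ (Fin n),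
      (∀ i ∈ s, ∀ j ∈ s, i ≠ j → r i + r j < dist (c i) (c j)) ∧
      ∀ i ∈ s, ‖c i‖ + r i ≤ 1 := by
  classical
  induction s using Finset.induction_on_min_value r with
  | empty => exact ⟨0, by simp, by simp⟩
  | insert a s ha hmin ih =>
    have hra : 0 < r a := hr a (Finset.mem_insert_self a s)
    have hrs : ∀ i ∈ s, 0 < r i := fun i hi ↦ hr i (Finset.mem_insert_of_mem hi)
    rw [Finset.sum_insert ha] at hsum
    have hs0 : 0 ≤ ∑ i ∈ s, r i ^ n := Finset.sum_nonneg fun i hi ↦ pow_nonneg (hrs i hi).le n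
    have hra0 : 0 ≤ r a ^ n := pow_nonneg hra.le n
    have hra4 : r a ≤ 1 / 4 := by
      refine le_of_pow_le_pow_left₀ hn (by norm_num) ?_
      rw [one_div, inv_pow]
      linarith
    obtain ⟨c, hc, hc1⟩ := ih hrs (by linarith)
    have hlt : ∑ j ∈ s, (r a + r j) ^ n < (1 - r a) ^ n := calc
      ∑ j ∈ s, (r a + r j) ^ n ≤ ∑ j ∈ s, (2 * r j) ^ n := Finset.sum_le_sum fun j hj ↦
        pow_le_pow_left₀ (add_pos hra (hrs j hj)).le (by linarith [hmin j hj]) n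
      _ = 2 ^ n * ∑ j ∈ s, r j ^ n := by simp only [mul_pow, Finset.mul_sum]
      _ ≤ 2 ^ n * ((4 : ℝ) ^ n)⁻¹ := by gcongr; linarith
      _ = (1 / 2) ^ n := by rw [← inv_pow, ← mul_pow]; norm_num
      _ < (1 - r a) ^ n := pow_lt_pow_left₀ (by linarith) (by norm_num) hn
    obtain ⟨y, hy, hyc⟩ := exists_mem_closedBall_forall_lt_dist s c (fun j ↦ r a + r j)
      (fun j hj ↦ (add_pos hra (hrs j hj)).le) 0 (by linarith) hlt
    rw [mem_closedBall_zero_iff] at hy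
    have hne : ∀ i ∈ s, i ≠ a := fun i hi h ↦ ha (h ▸ hi)
    refine ⟨Function.update c a y, fun i hi j hj hij ↦ ?_, fun i hi ↦ ?_⟩
    · rcases Finset.mem_insert.1 hi with rfl | his <;>
        rcases Finset.mem_insert.1 hj with rfl | hjs
      · exact absurd rfl hij
      · simpa [hne j hjs] using hyc j hjs
      · simpa [hne i his, dist_comm, add_comm] using hyc i his
      · simpa [hne i his, hne j hjs] using hc i his j hjs hij
    · rcases Finset.mem_insert.1 hi with rfl | hi
      · simp only [Function.update_self]
        linarith
      · simpa [hne i hi] using hc1 i hi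

/-- Let `n ≥ 1` and let `r 1, …, r p` be positive reals with
`∑ i, (r i)^n ≤ 4^{-n}`. Then there are points `c i` in `ℝⁿ` such that the closed
balls `B(c i, r i)` are pairwise disjoint and each is contained in the closed unit ball. -/
theorem stmt4 (n : ℕ) (hn : 1 ≤ n) (p : ℕ) (r : Fin p → ℝ) (hr : ∀ i, 0 < r i)
    (hsum : ∑ i, (r i) ^ n ≤ (((4 : ℝ) ^ n)⁻¹)) :
    ∃ c : Fin p → EuclideanSpace ℝ (Fin n),
      (∀ i j, i ≠ j →
        Disjoint (Metric.closedBall (c i) (r i)) (Metric.closedBall (c j) (r j))) ∧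
      (∀ i, Metric.closedBall (c i) (r i) ⊆
        Metric.closedBall (0 : EuclideanSpace ℝ (Fin n)) 1) := by
  obtain ⟨c, hc, hc1⟩ := exists_centers_of_sum_pow_le (Nat.one_le_iff_ne_zero.1 hn)
    Finset.univ r (fun i _ ↦ hr i) hsum
  refine ⟨c, fun i j hij ↦ Metric.closedBall_disjoint_closedBall
    (hc i (Finset.mem_univ i) j (Finset.mem_univ j) hij),
    fun i ↦ Metric.closedBall_subset_closedBall' ?_⟩
  rw [dist_zero_right, add_comm]
  exact hc1 i (Finset.mem_univ i)
end

section
/- There is a constant C(n) ≥ 1 depending only on n such that for every nonempty bounded open convex set A ⊆ ℝⁿ there exists a rectangle R with R ⊆ A ⊆ C(n)·R. Here a rectangle means the image of a product of closed intervals ∏_{i=1}^n [r_i, s_i] (with r_i < s_i for each i) under a rigid motion of ℝⁿ, and C(n)·R denotes the rectangle obtained by dilating R by the factor C(n) about its center. -/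
/-- A bounded set with two distinct points contains two distinct points whose distance is at least
half of the diameter. -/
theorem Bornology.IsBounded.exists_dist_le_two_mul_dist {X : Type*} [MetricSpace X] {A : Set X}
    (hb : Bornology.IsBounded A) (hA : A.Nontrivial) :
    ∃ p ∈ A, ∃ q ∈ A, p ≠ q ∧ ∀ x ∈ A, ∀ y ∈ A, dist x y ≤ 2 * dist p q := by
  have hpos : 0 < Metric.diam A := Metric.diam_pos hA hb
  by_contra! h
  have hle : Metric.diam A ≤ Metric.diam A / 2 := by
    refine Metric.diam_le_of_forall_dist_le (by positivity) fun p hp q hq => ?_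
    rcases eq_or_ne p q with rfl | hpq
    · simpa using (half_pos hpos).le
    · obtain ⟨x, hx, y, hy, hxy⟩ := h p hp q hq hpq
      linarith [Metric.dist_le_diam_of_mem hb hx hy]
  linarith

section Box

variable {E : Type*} [NormedAddCommGroup E] [InnerProductSpace ℝ E]

/-- Prepending a unit vector `e` to an orthonormal family in the orthogonal complement of `e` gives
an orthonormal family. -/
theorem Orthonormal.finCons {n : ℕ} {e : E} (he : ‖e‖ = 1) {b : Fin n → (ℝ ∙ e)ᗮ}
    (hb : Orthonormal ℝ b) :
    Orthonormal ℝ (Fin.cons e (fun i => (b i : E)) : Fin (n + 1) → E) := by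
  have heb : ∀ i, inner ℝ e (b i : E) = 0 := fun i =>
    Submodule.mem_orthogonal_singleton_iff_inner_right.1 (b i).2
  refine ⟨fun i => ?_, fun i j hij => ?_⟩
  · refine Fin.cases ?_ (fun i => ?_) i
    · simpa using he
    · simpa using hb.1 i
  · revert hij
    refine Fin.cases (Fin.cases ?_ (fun j => ?_) j) (fun i => Fin.cases ?_ (fun j => ?_) j) i
    · simp
    · intro _
      simpa using heb j
    · simpa [real_inner_comm] using heb i
    · intro hij
      simpa using hb.2 (fun h => hij (congrArg Fin.succ h))

/-- Two vectors agree if they have the same component along `e` and the same projection to the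
orthogonal complement of `e`. -/
theorem eq_of_inner_eq_of_orthogonalProjectionOnto_eq {e x y : E} (he : ‖e‖ = 1)
    (h : inner ℝ e x = inner ℝ e y)
    (hP : (ℝ ∙ e)ᗮ.orthogonalProjectionOnto x = (ℝ ∙ e)ᗮ.orthogonalProjectionOnto y) : x = y := by
  have hx := Submodule.starProjection_add_starProjection_orthogonal (K := ℝ ∙ e) x
  have hy := Submodule.starProjection_add_starProjection_orthogonal (K := ℝ ∙ e) y
  rw [Submodule.starProjection_unit_singleton ℝ he, Submodule.starProjection_apply] at hx hy
  rw [← hx, ← hy, h, hP]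

/-- A bounded open convex set in a finite-dimensional inner product space is approximated from
inside and outside by concentric boxes with respect to some orthonormal family. -/
theorem Convex.exists_orthonormal_box (n : ℕ) : ∀ {E : Type*} [NormedAddCommGroup E]
    [InnerProductSpace ℝ E] [FiniteDimensional ℝ E], Module.finrank ℝ E = n →
    ∀ {A : Set E}, A.Nonempty → Bornology.IsBounded A → IsOpen A → Convex ℝ A →
    ∃ (b : Fin n → E) (c : E) (l : Fin n → ℝ), Orthonormal ℝ b ∧ (∀ i, 0 < l i) ∧
      (∀ x, (∀ i, |inner ℝ (b i) (x - c)| ≤ l i) → x ∈ A) ∧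
      ∀ x ∈ A, ∀ i, |inner ℝ (b i) (x - c)| ≤ 15 ^ n * l i := by
  induction n with
  | zero =>
    intro E _ _ _ hE A hA _ _ _
    obtain ⟨a, ha⟩ := hA
    have : Subsingleton E := Module.finrank_zero_iff.1 hE
    exact ⟨Fin.elim0, a, Fin.elim0, ⟨fun i => i.elim0, fun i => i.elim0⟩, fun i => i.elim0,
      fun x _ => Subsingleton.elim a x ▸ ha, fun _ _ i => i.elim0⟩
  | succ n ih =>
    intro E _ _ _ hE A hA hbdd hopen hconv
    have : Nontrivial E := Module.nontrivial_of_finrank_eq_succ hE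
    have hAnt : A.Nontrivial := by
      obtain ⟨a, ha⟩ := hA
      exact (infinite_of_mem_nhds a (hopen.mem_nhds ha)).nontrivial
    obtain ⟨p, hp, q, hq, hpq, hdist⟩ := hbdd.exists_dist_le_two_mul_dist hAnt
    obtain ⟨d, hd⟩ : ∃ d, d = dist p q := ⟨_, rfl⟩
    have hd0 : 0 < d := hd ▸ dist_pos.2 hpq
    obtain ⟨e, he_def⟩ : ∃ e : E, e = d⁻¹ • (q - p) := ⟨_, rfl⟩
    have he : ‖e‖ = 1 := by
      rw [he_def, norm_smul, ← dist_eq_norm, dist_comm q p, ← hd, norm_inv, Real.norm_eq_abs,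
        abs_of_pos hd0, inv_mul_cancel₀ hd0.ne']
    have hqp : q = p + d • e := by
      rw [he_def, smul_inv_smul₀ hd0.ne', add_sub_cancel]
    have hee : inner ℝ e e = (1 : ℝ) := by rw [real_inner_self_eq_norm_sq, he, one_pow]
    have hheight : ∀ x ∈ A, ∀ y ∈ A, inner ℝ e x - inner ℝ e y ≤ 2 * d := fun x hx y hy => by
      rw [← inner_sub_right]
      refine (real_inner_le_norm _ _).trans ?_
      rw [he, one_mul, ← dist_eq_norm, hd]
      exact hdist x hx y hy
    have hqe : inner ℝ e q = inner ℝ e p + d := by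
      rw [hqp, inner_add_right, inner_smul_right, hee, mul_one]
    obtain ⟨P, hP⟩ : ∃ P, P = (ℝ ∙ e)ᗮ.orthogonalProjectionOnto := ⟨_, rfl⟩
    have hPe : P e = 0 := by
      rw [hP]
      exact Submodule.orthogonalProjectionOnto_orthogonal_apply_eq_zero
        (Submodule.mem_span_singleton_self e)
    have hPcoe : ∀ w : (ℝ ∙ e)ᗮ, P (w : E) = w := fun w => by rw [hP]; simp
    have hPinner : ∀ (w : (ℝ ∙ e)ᗮ) (v : E), inner ℝ (w : E) v = inner ℝ w (P v) := fun w v => by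
      rw [hP]; simp
    have hPsurj : Function.Surjective P := fun w => ⟨w, hPcoe w⟩
    have hfin : Module.finrank ℝ (ℝ ∙ e)ᗮ = n := by
      have : Fact (Module.finrank ℝ E = n + 1) := ⟨hE⟩
      exact Submodule.finrank_orthogonal_span_singleton (by rintro rfl; simp at he)
    obtain ⟨b, c, l, hb, hl, hin, hout⟩ := ih hfin (hA.image P) (P.lipschitz.isBounded_image hbdd)
      (P.isOpenMap hPsurj A hopen) (hconv.linear_image P.toLinearMap)
    -- The centre projects to `c / 5 + 4 P p / 5` and has the height of the midpoint of `p` and `q`.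
    obtain ⟨z, hz⟩ : ∃ z : E, z = (((1 / 5 : ℝ) • c + (4 / 5 : ℝ) • P p : (ℝ ∙ e)ᗮ) : E) +
      (inner ℝ e p + d / 2) • e := ⟨_, rfl⟩
    have hze : inner ℝ e z = inner ℝ e p + d / 2 := by
      rw [hz, inner_add_right, Submodule.mem_orthogonal_singleton_iff_inner_right.1 (Subtype.mem _),
        inner_smul_right, hee, zero_add, mul_one]
    have hPz : P z = (1 / 5 : ℝ) • c + (4 / 5 : ℝ) • P p := by
      rw [hz, map_add, hPcoe, map_smul, hPe, smul_zero, add_zero]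
    refine ⟨Fin.cons e fun i => (b i : E), z, Fin.cons (d / 10) fun i => l i / 5, hb.finCons he,
      ?_, fun x hx => ?_, fun x hx => ?_⟩
    · refine Fin.cases ?_ fun i => ?_
      · simpa using hd0
      · simpa using hl i
    · have hx0 := hx 0
      rw [Fin.cons_zero, Fin.cons_zero, inner_sub_right, hze, abs_le] at hx0
      obtain ⟨y, hyA, hy⟩ : (5 : ℝ) • P x - (4 : ℝ) • P p ∈ P '' A := by
        refine hin _ fun i => ?_
        have hxi := hx i.succ
        rw [Fin.cons_succ, Fin.cons_succ, hPinner, map_sub, hPz] at hxi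
        have hscale : (5 : ℝ) • P x - (4 : ℝ) • P p - c =
            (5 : ℝ) • (P x - ((1 / 5 : ℝ) • c + (4 / 5 : ℝ) • P p)) := by module
        rw [hscale, inner_smul_right, abs_mul, abs_of_pos (by norm_num : (0 : ℝ) < 5)]
        linarith
      have hyp := hheight y hyA p hp
      have hqy := hheight q hq y hyA
      obtain ⟨t, ht⟩ : ∃ t, t = (5 * inner ℝ e x - inner ℝ e y - 4 * inner ℝ e p) / (4 * d) :=
        ⟨_, rfl⟩
      have htd : t * d = (5 * inner ℝ e x - inner ℝ e y - 4 * inner ℝ e p) / 4 := by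
        rw [ht]; field_simp
      have ht0 : 0 ≤ t := nonneg_of_mul_nonneg_left (b := d) (by linarith) hd0
      have ht1 : t ≤ 1 := le_of_mul_le_mul_right (a := d) (by linarith) hd0
      have hm : p + t • (q - p) ∈ A := hconv.add_smul_sub_mem hp hq ⟨ht0, ht1⟩
      have hxeq : x = (1 / 5 : ℝ) • y + (4 / 5 : ℝ) • (p + t • (q - p)) := by
        refine eq_of_inner_eq_of_orthogonalProjectionOnto_eq he ?_ ?_
        · simp only [inner_add_right, inner_smul_right, inner_sub_right, hqe]
          linarith
        · rw [← hP, hqp, add_sub_cancel_left]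
          simp only [map_add, map_smul, hPe, hy]
          module
      rw [hxeq]
      exact hconv hyA hm (by norm_num) (by norm_num) (by norm_num)
    · refine Fin.cases ?_ fun i => ?_
      · rw [Fin.cons_zero, Fin.cons_zero, inner_sub_right, hze]
        have hxp := hheight x hx p hp
        have hqx := hheight q hq x hx
        have hpow : (1 : ℝ) ≤ 15 ^ n := one_le_pow₀ (by norm_num)
        have hmul : d ≤ 15 ^ n * d := le_mul_of_one_le_left hd0.le hpow
        rw [abs_le, pow_succ]
        constructor <;> linarith
      · rw [Fin.cons_succ, Fin.cons_succ, hPinner, map_sub, hPz]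
        have hxi := abs_le.1 (hout _ (Set.mem_image_of_mem P hx) i)
        have hpi := abs_le.1 (hout _ (Set.mem_image_of_mem P hp) i)
        have hsplit : P x - ((1 / 5 : ℝ) • c + (4 / 5 : ℝ) • P p) =
            (P x - c) - (4 / 5 : ℝ) • (P p - c) := by module
        have hmul : 0 < 15 ^ n * l i := mul_pos (by positivity) (hl i)
        rw [hsplit, inner_sub_right, inner_smul_right, abs_le, pow_succ]
        constructor <;> linarith

end Box

/-- **Lemma 4.4.** There is `C(n) ≥ 1` such that every nonempty bounded
open convex set `A ⊆ ℝⁿ` contains a rectangle `R` (an isometric image of a product of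
closed intervals) with `R ⊆ A ⊆ C(n)·R`, where `C(n)·R` is the dilate of `R` by the
factor `C(n)` about its center. -/
theorem stmt9 (n : ℕ) (hn : 1 ≤ n) :
    ∃ C : ℝ, 1 ≤ C ∧ ∀ A : Set (EuclideanSpace ℝ (Fin n)),
      A.Nonempty → Bornology.IsBounded A → IsOpen A → Convex ℝ A →
      ∃ (f : EuclideanSpace ℝ (Fin n) ≃ᵢ EuclideanSpace ℝ (Fin n)) (r s : Fin n → ℝ),
        (∀ i, r i < s i) ∧
        f '' {x : EuclideanSpace ℝ (Fin n) | ∀ i, x i ∈ Set.Icc (r i) (s i)} ⊆ A ∧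
        A ⊆ f '' {x : EuclideanSpace ℝ (Fin n) | ∀ i,
          x i ∈ Set.Icc ((r i + s i) / 2 - C * (s i - r i) / 2)
            ((r i + s i) / 2 + C * (s i - r i) / 2)} := by
  refine ⟨15 ^ n, one_le_pow₀ (by norm_num), fun A hA hbdd hopen hconv => ?_⟩
  obtain ⟨v, c, l, hv, hl, hin, hout⟩ :=
    Convex.exists_orthonormal_box n (finrank_euclideanSpace_fin (𝕜 := ℝ)) hA hbdd hopen hconv
  obtain ⟨b, hb⟩ : ∃ b : OrthonormalBasis (Fin n) ℝ (EuclideanSpace ℝ (Fin n)), ⇑b = v := by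
    have hspan := hv.linearIndependent.span_eq_top_of_card_eq_finrank' (by simp)
    exact ⟨OrthonormalBasis.mk hv hspan.ge, OrthonormalBasis.coe_mk hv hspan.ge⟩
  refine ⟨b.repr.symm.toIsometryEquiv, fun i => inner ℝ (v i) c - l i,
    fun i => inner ℝ (v i) c + l i, fun i => by linarith [hl i], ?_, fun x hx => ?_⟩
  · rintro _ ⟨x, hx, rfl⟩
    refine hin _ fun i => ?_
    have hrepr : inner ℝ (v i) (b.repr.symm x) = x i := by
      rw [← hb, ← b.repr_apply_apply, LinearIsometryEquiv.apply_symm_apply]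
    obtain ⟨h₁, h₂⟩ := hx i
    rw [inner_sub_right, LinearIsometryEquiv.coe_toIsometryEquiv, hrepr, abs_le]
    constructor <;> linarith
  · refine ⟨b.repr x, fun i => ?_, by simp⟩
    have hxi := hout x hx i
    rw [inner_sub_right, abs_le] at hxi
    rw [b.repr_apply_apply, hb]
    constructor <;> linarith
end

section
/- Let X be a topological space, let i ≥ 0 be an integer, and let V be an open subset of S^i × X. Then P[V] is an open subset of X. -/
/-- The sphere `S^i`, realized as the unit sphere in `ℝ^{i+1}`. -/
abbrev Sph (i : ℕ) := Metric.sphere (0 : EuclideanSpace ℝ (Fin (i + 1))) 1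

/-- For `V ⊆ S^i × X`, `Pset i V = ⋂_{θ ∈ S^i} (V(θ) ∪ V(-θ))`, where
`V(θ) = {x : (θ, x) ∈ V}`. -/
def Pset {X : Type*} (i : ℕ) (V : Set (Sph i × X)) : Set X :=
  ⋂ θ : Sph i, ({x | (θ, x) ∈ V} ∪ {x | (-θ, x) ∈ V})

/-- If `V` is an open subset of `S^i × X`, then `P[V]` is open in `X`. -/
theorem stmt10 (X : Type*) [TopologicalSpace X] (i : ℕ)
    (V : Set (Sph i × X)) (hV : IsOpen V) : IsOpen (Pset i V) := by
  have hW : IsOpen {p : X × Sph i | (p.2, p.1) ∈ V ∨ (-p.2, p.1) ∈ V} :=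
    (hV.preimage continuous_swap).union
      (hV.preimage (continuous_snd.neg.prodMk continuous_fst))
  rw [isOpen_iff_eventually]
  intro x hx
  have hx' : ∀ θ : Sph i, (θ, x) ∈ V ∨ (-θ, x) ∈ V := Set.mem_iInter.mp hx
  have h := (isCompact_univ (X := Sph i)).eventually_forall_of_forall_eventually
    (x₀ := x) (P := fun x θ => (θ, x) ∈ V ∨ (-θ, x) ∈ V)
    fun θ _ => hW.mem_nhds (hx' θ)
  exact h.mono fun y hy => Set.mem_iInter.mpr fun θ => hy θ (Set.mem_univ θ)
end

section
/- Let X be a topological space, let i ≥ 0 be an integer, and let V be an open subset of S^i × X. Suppose K_1 ⊆ K_2 ⊆ ⋯ are compact subsets of S^i × X with K_j contained in the interior of K_{j+1} for every j and with ⋃_{j=1}^∞ K_j = V. Then P[V] = ⋃_{j=1}^∞ P[K_j]. -/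
theorem Pset_mono {X : Type*} {i : ℕ} {V W : Set (Sph i × X)} (h : V ⊆ W) :
    Pset i V ⊆ Pset i W :=
  Set.iInter_mono fun _ => Set.union_subset_union (fun _ hx => h hx) (fun _ hx => h hx)

/-- `Pset` commutes with increasing unions of open sets, by compactness of the sphere. -/
theorem Pset_iUnion_of_isOpen {X : Type*} [TopologicalSpace X] {i : ℕ}
    {U : ℕ → Set (Sph i × X)} (hU : ∀ j, IsOpen (U j)) (hmono : Monotone U) :
    Pset i (⋃ j, U j) = ⋃ j, Pset i (U j) := by
  refine subset_antisymm (fun x hx => ?_)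
    (Set.iUnion_subset fun j => Pset_mono (Set.subset_iUnion U j))
  simp only [Pset, Set.mem_iInter, Set.mem_union, Set.mem_ofPred_eq, Set.mem_iUnion] at hx ⊢
  obtain ⟨j, hj⟩ := (isCompact_univ (X := Sph i)).elim_directed_cover
    (fun j => {θ | (θ, x) ∈ U j} ∪ {θ | (-θ, x) ∈ U j})
    (fun j => ((hU j).preimage (by fun_prop)).union ((hU j).preimage (by fun_prop)))
    (fun θ _ => by
      rcases hx θ with ⟨j, hj⟩ | ⟨j, hj⟩
      · exact Set.mem_iUnion.2 ⟨j, Or.inl hj⟩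
      · exact Set.mem_iUnion.2 ⟨j, Or.inr hj⟩)
    (Monotone.directed_le fun a b hab =>
      Set.union_subset_union (fun _ h => hmono hab h) (fun _ h => hmono hab h))
  exact ⟨j, fun θ => hj (Set.mem_univ θ)⟩

/-- If `V ⊆ S^i × X` is open and `K 1 ⊆ K 2 ⊆ ⋯` is an exhaustion of
`V` by compact sets, each contained in the interior of the next, then
`P[V] = ⋃ j, P[K j]`. -/
theorem stmt11 (X : Type*) [TopologicalSpace X] (i : ℕ)
    (V : Set (Sph i × X)) (hV : IsOpen V)
    (K : ℕ → Set (Sph i × X)) (hK : ∀ j, IsCompact (K j))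
    (hmono : ∀ j, K j ⊆ interior (K (j + 1)))
    (hunion : ⋃ j, K j = V) :
    Pset i V = ⋃ j, Pset i (K j) := by
  have hinterior : ⋃ j, interior (K j) = V := by
    rw [← hunion]
    exact subset_antisymm (Set.iUnion_mono fun j => interior_subset)
      (Set.iUnion_subset fun j => (hmono j).trans (Set.subset_iUnion (fun j => interior (K j)) _))
  have hKmono : Monotone K := monotone_nat_of_le_succ fun j => (hmono j).trans interior_subset
  apply subset_antisymm
  · rw [← hinterior, Pset_iUnion_of_isOpen (fun j => isOpen_interior)
      fun a b hab => interior_mono (hKmono hab)]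
    exact Set.iUnion_mono fun j => Pset_mono interior_subset
  · exact Set.iUnion_subset fun j => Pset_mono (hunion ▸ Set.subset_iUnion K j)
end

section
/- Let d ≥ 1 be an integer and let t_1, …, t_d be real numbers in [0,1]. Then there exists an integer k with 0 ≤ k ≤ d such that exactly k of the indices i ∈ {1,…,d} satisfy t_i > 1/(k+2) and the remaining d−k indices satisfy t_i < 1/(k+2). -/
/-- For `t 1, …, t d ∈ [0,1]` there is `0 ≤ k ≤ d` such that exactly `k`
of the indices satisfy `t i > 1/(k+2)` and the remaining `d - k` satisfy `t i < 1/(k+2)`. -/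
theorem stmt12 (d : ℕ) (hd : 1 ≤ d) (t : Fin d → ℝ) (ht : ∀ i, t i ∈ Set.Icc (0 : ℝ) 1) :
    ∃ k : ℕ, k ≤ d ∧ ∃ A : Finset (Fin d), A.card = k ∧
      (∀ i ∈ A, 1 / ((k : ℝ) + 2) < t i) ∧
      (∀ i, i ∉ A → t i < 1 / ((k : ℝ) + 2)) := by
  classical
  let A : ℕ → Finset (Fin d) := fun k => {i | 1 / ((k : ℝ) + 2) ≤ t i}
  have mem_A (k : ℕ) (i : Fin d) : i ∈ A k ↔ 1 / ((k : ℝ) + 2) ≤ t i := by simp [A]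
  have card_A_le_d : (A d).card ≤ d := by simpa using (A d).card_le_univ
  have exists_card_le : ∃ k, (A k).card ≤ k := ⟨d, card_A_le_d⟩
  -- The least `k` with at most `k` indices satisfying `1 / (k + 2) ≤ t i` works.
  obtain ⟨k, hk, card_le, hmin⟩ :
      ∃ k, k ≤ d ∧ (A k).card ≤ k ∧ ∀ m < k, m < (A m).card :=
    ⟨Nat.find exists_card_le, Nat.find_min' _ card_A_le_d, Nat.find_spec exists_card_le,
      fun m hm => not_le.mp (Nat.find_min exists_card_le hm)⟩
  have notMem_A (i : Fin d) (hi : i ∉ A k) : t i < 1 / ((k : ℝ) + 2) :=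
    not_le.mp fun h => hi ((mem_A k i).mpr h)
  refine ⟨k, hk, A k, ?_⟩
  cases k with
  | zero =>
    have card_eq : (A 0).card = 0 := Nat.le_zero.mp card_le
    refine ⟨card_eq, fun i hi => ?_, notMem_A⟩
    simp [Finset.card_eq_zero.mp card_eq] at hi
  | succ m =>
    have lt_card : m < (A m).card := hmin m m.lt_succ_self
    have threshold_lt : 1 / (((m + 1 : ℕ) : ℝ) + 2) < 1 / ((m : ℝ) + 2) := by
      apply one_div_lt_one_div_of_lt (by positivity)
      push_cast
      linarith
    have subset : A m ⊆ A (m + 1) := fun i hi =>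
      (mem_A _ i).mpr (threshold_lt.le.trans ((mem_A m i).mp hi))
    have A_eq : A m = A (m + 1) :=
      Finset.eq_of_subset_of_card_le subset (card_le.trans lt_card)
    refine ⟨le_antisymm card_le (A_eq ▸ lt_card), fun i hi => ?_, notMem_A⟩
    exact threshold_lt.trans_le ((mem_A m i).mp (A_eq ▸ hi))
end

section
/- Let d ≥ 1 be an integer and let P(x,y) be a real polynomial in two variables of total degree at most d which is not identically zero. Then the 1-dimensional Hausdorff measure of the set {(x,y) ∈ ℝ² : x² + y² ≤ 1 and P(x,y) = 0} is at most π·d. -/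
open MeasureTheory

local notation "Plane" => EuclideanSpace ℝ (Fin 2)

/-- The zero set of a bivariate real polynomial in the Euclidean plane. -/
def planeZeros (P : MvPolynomial (Fin 2) ℝ) : Set (EuclideanSpace ℝ (Fin 2)) :=
  {x | MvPolynomial.eval (fun j => x j) P = 0}

/-- A plane set all of whose chords make an angle of sine at most `ε` with the direction
`(cos α, sin α)`. -/
def IsFlat (ε α : ℝ) (A : Set (EuclideanSpace ℝ (Fin 2))) : Prop :=
  ∀ x ∈ A, ∀ y ∈ A,
    |Real.cos α * (x 1 - y 1) - Real.sin α * (x 0 - y 0)| ≤ ε * ‖x - y‖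

/-- A plane set covered by countably many measurable `ε`-flat sets. -/
def HasFlatCover (ε : ℝ) (A : Set (EuclideanSpace ℝ (Fin 2))) : Prop :=
  ∃ S : Set (Set (EuclideanSpace ℝ (Fin 2))), S.Countable ∧
    (∀ B ∈ S, MeasurableSet B ∧ ∃ α, IsFlat ε α B) ∧ A ⊆ ⋃₀ S

theorem IsFlat.mono {ε α : ℝ} {A B : Set Plane} (hB : IsFlat ε α B) (h : A ⊆ B) :
    IsFlat ε α A :=
  fun x hx y hy => hB x (h hx) y (h hy)

theorem HasFlatCover.mono {ε : ℝ} {A B : Set Plane} (hB : HasFlatCover ε B) (h : A ⊆ B) :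
    HasFlatCover ε A := by
  obtain ⟨S, hS, hf, hc⟩ := hB
  exact ⟨S, hS, hf, h.trans hc⟩

theorem HasFlatCover.union {ε : ℝ} {A B : Set Plane} (hA : HasFlatCover ε A)
    (hB : HasFlatCover ε B) : HasFlatCover ε (A ∪ B) := by
  obtain ⟨S, hS, hSf, hSc⟩ := hA
  obtain ⟨T, hT, hTf, hTc⟩ := hB
  refine ⟨S ∪ T, hS.union hT, fun C hC => hC.elim (hSf C) (hTf C), ?_⟩
  rw [Set.sUnion_union]
  exact Set.union_subset_union hSc hTc

theorem measurableSet_planeZeros (P : MvPolynomial (Fin 2) ℝ) :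
    MeasurableSet (planeZeros P) := by
  have hc : Continuous fun x : Plane => MvPolynomial.eval (fun j => x j) P :=
    P.continuous_eval.comp (by fun_prop)
  exact (isClosed_singleton (x := (0 : ℝ)).preimage hc).measurableSet

theorem hasStrictFDerivAt_eval_plane (P : MvPolynomial (Fin 2) ℝ) (x : Plane) :
    HasStrictFDerivAt (fun y : Plane => MvPolynomial.eval (fun j => y j) P)
      (∑ i, MvPolynomial.eval (fun j => x j) (MvPolynomial.pderiv i P) •
        (EuclideanSpace.proj i : Plane →L[ℝ] ℝ)) x := by
  induction P using MvPolynomial.induction_on with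
  | C a => simpa using hasStrictFDerivAt_const (𝕜 := ℝ) a x
  | add p q hp hq =>
    simp only [map_add, add_smul, Finset.sum_add_distrib]
    exact hp.add hq
  | mul_X p k hp =>
    have hX : HasStrictFDerivAt (fun y : Plane => y k)
        (EuclideanSpace.proj k : Plane →L[ℝ] ℝ) x :=
      (EuclideanSpace.proj k : Plane →L[ℝ] ℝ).hasStrictFDerivAt
    have h := hp.mul hX
    simp only [map_mul, MvPolynomial.eval_X]
    refine h.congr_fderiv ?_
    ext v
    fin_cases k <;>
      simp [MvPolynomial.pderiv_X, Fin.sum_univ_two] <;> ring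

theorem exists_cos_sin_of_sq_add_sq_eq_one {a b : ℝ} (h : a ^ 2 + b ^ 2 = 1) :
    ∃ α, Real.cos α = a ∧ Real.sin α = b := by
  have hn : ‖(⟨a, b⟩ : ℂ)‖ = 1 := by
    rw [← sq_eq_sq₀ (norm_nonneg _) zero_le_one, Complex.sq_norm, Complex.normSq_mk]
    linarith
  have h0 : (⟨a, b⟩ : ℂ) ≠ 0 := by
    rw [← norm_ne_zero_iff, hn]; exact one_ne_zero
  refine ⟨Complex.arg ⟨a, b⟩, ?_, ?_⟩
  · rw [Complex.cos_arg h0, hn, div_one]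
  · rw [Complex.sin_arg, hn, div_one]

theorem exists_isFlat_nhds_of_pderiv_ne_zero {ε : ℝ} (hε : 0 < ε) (P : MvPolynomial (Fin 2) ℝ)
    (x : Plane) {i : Fin 2}
    (hx : MvPolynomial.eval (fun j => x j) (MvPolynomial.pderiv i P) ≠ 0) :
    ∃ U : Set Plane, IsOpen U ∧ x ∈ U ∧ ∃ α, IsFlat ε α (U ∩ planeZeros P) := by
  set a := MvPolynomial.eval (fun j => x j) (MvPolynomial.pderiv 0 P) with ha
  set b := MvPolynomial.eval (fun j => x j) (MvPolynomial.pderiv 1 P) with hb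
  have hpos : 0 < a ^ 2 + b ^ 2 := by
    have : a ≠ 0 ∨ b ≠ 0 := by
      fin_cases i
      · exact Or.inl hx
      · exact Or.inr hx
    rcases this with h | h <;> positivity
  set r := Real.sqrt (a ^ 2 + b ^ 2) with hr
  have hr0 : 0 < r := Real.sqrt_pos.2 hpos
  have hr2 : r ^ 2 = a ^ 2 + b ^ 2 := Real.sq_sqrt hpos.le
  obtain ⟨α, hc, hs⟩ := exists_cos_sin_of_sq_add_sq_eq_one
    (a := b / r) (b := -a / r) (by field_simp; linarith)
  have hd := (hasStrictFDerivAt_eval_plane P x).isLittleO.bound (mul_pos hε hr0)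
  rw [nhds_prod_eq, Filter.eventually_prod_self_iff'] at hd
  obtain ⟨t, ht, h⟩ := hd
  obtain ⟨U, hUt, hU, hxU⟩ := mem_nhds_iff.1 ht
  refine ⟨U, hU, hxU, α, ?_⟩
  rintro y ⟨hyU, hy⟩ z ⟨hzU, hz⟩
  have hyz := h y (hUt hyU) z (hUt hzU)
  simp only [planeZeros, Set.mem_ofPred_eq] at hy hz
  simp only [hy, hz, Fin.sum_univ_two, ← ha, ← hb] at hyz
  simp only [sub_self, zero_sub, norm_neg, Real.norm_eq_abs] at hyz
  have e : Real.cos α * (y 1 - z 1) - Real.sin α * (y 0 - z 0)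
      = (a * (y 0 - z 0) + b * (y 1 - z 1)) / r := by
    rw [hc, hs]; ring
  rw [e, abs_div, abs_of_pos hr0, div_le_iff₀ hr0]
  have : ε * r * ‖y - z‖ = ε * ‖y - z‖ * r := by ring
  rw [this] at hyz
  simpa using hyz

theorem hasFlatCover_regular {ε : ℝ} (hε : 0 < ε) (P : MvPolynomial (Fin 2) ℝ) :
    HasFlatCover ε {x ∈ planeZeros P |
      ∃ i, MvPolynomial.eval (fun j => x j) (MvPolynomial.pderiv i P) ≠ 0} := by
  set A := {x ∈ planeZeros P |
      ∃ i, MvPolynomial.eval (fun j => x j) (MvPolynomial.pderiv i P) ≠ 0}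
  have H : ∀ x : Plane, ∃ U : Set Plane, x ∈ A →
      IsOpen U ∧ x ∈ U ∧ ∃ α, IsFlat ε α (U ∩ planeZeros P) := by
    intro x
    by_cases hx : x ∈ A
    · obtain ⟨i, hi⟩ := hx.2
      obtain ⟨U, hU⟩ := exists_isFlat_nhds_of_pderiv_ne_zero hε P x hi
      exact ⟨U, fun _ => hU⟩
    · exact ⟨∅, fun h => absurd h hx⟩
  choose U hU using H
  obtain ⟨t, htA, htc, ht⟩ := TopologicalSpace.countable_cover_nhdsWithin (s := A) (f := U)
    fun x hx => mem_nhdsWithin_of_mem_nhds ((hU x hx).1.mem_nhds (hU x hx).2.1)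
  refine ⟨(fun x => U x ∩ planeZeros P) '' t, htc.image _, ?_, ?_⟩
  · rintro _ ⟨x, hx, rfl⟩
    exact ⟨(hU x (htA hx)).1.measurableSet.inter (measurableSet_planeZeros P),
      (hU x (htA hx)).2.2⟩
  · intro y hy
    obtain ⟨x, hx, hyx⟩ := Set.mem_iUnion₂.1 (ht hy)
    exact ⟨_, ⟨x, hx, rfl⟩, hyx, hy.1⟩

theorem totalDegree_pderiv_lt {σ : Type*} (P : MvPolynomial σ ℝ) (i : σ)
    (h : MvPolynomial.pderiv i P ≠ 0) :
    (MvPolynomial.pderiv i P).totalDegree < P.totalDegree := by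
  obtain ⟨m, hm, hmd⟩ := Finset.exists_mem_eq_sup _ (MvPolynomial.support_nonempty.2 h)
    fun s => s.sum fun _ e => e
  have hc : MvPolynomial.coeff m (MvPolynomial.pderiv i P) ≠ 0 := MvPolynomial.mem_support_iff.1 hm
  rw [MvPolynomial.coeff_pderiv] at hc
  have hle := MvPolynomial.le_totalDegree (MvPolynomial.mem_support_iff.2 (left_ne_zero_of_mul hc))
  rw [Finsupp.sum_add_index' (fun _ => rfl) (fun _ _ _ => rfl),
    Finsupp.sum_single_index rfl] at hle
  rw [MvPolynomial.totalDegree, hmd]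
  exact hle

theorem exists_pderiv_ne_zero {σ : Type*} (P : MvPolynomial σ ℝ) (h : P.totalDegree ≠ 0) :
    ∃ i, MvPolynomial.pderiv i P ≠ 0 := by
  rw [Ne, MvPolynomial.totalDegree_eq_zero_iff] at h
  push Not at h
  obtain ⟨m, hm, i, hi⟩ := h
  refine ⟨i, fun hz => ?_⟩
  have hc := MvPolynomial.coeff_pderiv P (i := i) (m - Finsupp.single i 1)
  have hle : Finsupp.single i 1 ≤ m := by
    rw [Finsupp.single_le_iff]; omega
  rw [hz, tsub_add_cancel_of_le hle, MvPolynomial.coeff_zero, eq_comm, mul_eq_zero] at hc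
  rcases hc with hc | hc
  · exact MvPolynomial.mem_support_iff.1 hm hc
  · exact absurd hc (by positivity)

theorem hasFlatCover_planeZeros {ε : ℝ} (hε : 0 < ε) (P : MvPolynomial (Fin 2) ℝ)
    (hP : P ≠ 0) : HasFlatCover ε (planeZeros P) := by
  induction hn : P.totalDegree using Nat.strong_induction_on generalizing P with
  | _ n ih =>
  by_cases hdeg : P.totalDegree = 0
  · rw [MvPolynomial.totalDegree_eq_zero_iff_eq_C] at hdeg
    refine ⟨∅, Set.countable_empty, by simp, fun x hx => ?_⟩
    have hx' : MvPolynomial.eval (fun j => x j) P = 0 := hx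
    rw [hdeg, MvPolynomial.eval_C] at hx'
    rw [hx', map_zero] at hdeg
    exact absurd hdeg hP
  · obtain ⟨i, hi⟩ := exists_pderiv_ne_zero P hdeg
    refine ((hasFlatCover_regular hε P).union
      (ih _ (hn ▸ totalDegree_pderiv_lt P i hi) _ hi rfl)).mono fun x hx => ?_
    by_cases h : MvPolynomial.eval (fun j => x j) (MvPolynomial.pderiv i P) = 0
    · exact Or.inr h
    · exact Or.inl ⟨hx, i, h⟩

/-- The coordinate of a point of the plane along the direction `(cos θ, sin θ)`. -/
noncomputable def planeProj (θ : ℝ) (x : EuclideanSpace ℝ (Fin 2)) : ℝ :=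
  Real.cos θ * x 0 + Real.sin θ * x 1

theorem continuous_planeProj (θ : ℝ) : Continuous (planeProj θ) := by
  unfold planeProj
  fun_prop

theorem planeProj_sub (θ : ℝ) (x y : Plane) :
    planeProj θ (x - y) = planeProj θ x - planeProj θ y := by
  simp only [planeProj, PiLp.sub_apply]
  ring

theorem sq_norm_plane (x : Plane) : ‖x‖ ^ 2 = x 0 ^ 2 + x 1 ^ 2 := by
  simp [EuclideanSpace.norm_sq_eq, Fin.sum_univ_two]

theorem abs_planeProj_le_norm (θ : ℝ) (x : Plane) : |planeProj θ x| ≤ ‖x‖ := by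
  refine abs_le_of_sq_le_sq ?_ (norm_nonneg _)
  rw [sq_norm_plane, planeProj]
  nlinarith [sq_nonneg (Real.sin θ * x 0 - Real.cos θ * x 1), Real.sin_sq_add_cos_sq θ]

theorem IsFlat.mul_norm_sub_le {ε α : ℝ} {A : Set Plane} (hA : IsFlat ε α A) (θ : ℝ)
    {x y : Plane} (hx : x ∈ A) (hy : y ∈ A) :
    (|Real.cos (θ - α)| - 2 * ε) * ‖x - y‖ ≤ |planeProj θ x - planeProj θ y| := by
  have hb := hA x hx y hy
  rw [← planeProj_sub]
  set v := x - y with hv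
  have h0 : x 0 - y 0 = v 0 := rfl
  have h1 : x 1 - y 1 = v 1 := rfl
  rw [h0, h1] at hb
  set a := planeProj α v with ha
  set b := Real.cos α * v 1 - Real.sin α * v 0 with hbdef
  have hsum : ‖v‖ ^ 2 = a ^ 2 + b ^ 2 := by
    rw [sq_norm_plane, ha, hbdef, planeProj]
    linear_combination -(v 0 ^ 2 + v 1 ^ 2) * Real.sin_sq_add_cos_sq α
  have hdec : planeProj θ v = a * Real.cos (θ - α) + b * Real.sin (θ - α) := by
    rw [ha, hbdef, planeProj, planeProj, Real.cos_sub, Real.sin_sub]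
    linear_combination -(Real.cos θ * v 0 + Real.sin θ * v 1) * Real.sin_sq_add_cos_sq α
  have hnorm : ‖v‖ ≤ |a| + |b| := by
    refine le_of_sq_le_sq ?_ (by positivity)
    nlinarith [sq_abs a, sq_abs b, mul_nonneg (abs_nonneg a) (abs_nonneg b)]
  have hc : |Real.cos (θ - α)| ≤ 1 := Real.abs_cos_le_one _
  have hs : |Real.sin (θ - α)| ≤ 1 := Real.abs_sin_le_one _
  have htri : |a| * |Real.cos (θ - α)| - |b| * |Real.sin (θ - α)| ≤ |planeProj θ v| := by
    rw [hdec, ← abs_mul, ← abs_mul]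
    have := abs_sub_abs_le_abs_sub (a * Real.cos (θ - α)) (-(b * Real.sin (θ - α)))
    rwa [abs_neg, sub_neg_eq_add] at this
  nlinarith [mul_le_mul_of_nonneg_left hs (abs_nonneg b),
    mul_le_mul_of_nonneg_right hnorm (abs_nonneg (Real.cos (θ - α))),
    mul_le_mul_of_nonneg_left hc (abs_nonneg b)]

theorem ofReal_mul_hausdorffMeasure_le_of_antilipschitzOn {X : Type*} [MetricSpace X]
    [MeasurableSpace X] [BorelSpace X] {A : Set X} {f : X → ℝ} {c : ℝ} (hc : 0 < c)
    (h : ∀ x ∈ A, ∀ y ∈ A, c * dist x y ≤ |f x - f y|) :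
    ENNReal.ofReal c * μH[1] A ≤ volume (f '' A) := by
  have hanti : AntilipschitzWith (Real.toNNReal c⁻¹) (A.domRestrict f) := by
    refine AntilipschitzWith.of_le_mul_dist fun x y => ?_
    rw [Real.coe_toNNReal _ (by positivity), Subtype.dist_eq, inv_mul_eq_div, le_div_iff₀ hc,
      mul_comm, Real.dist_eq]
    exact h x x.2 y y.2
  have hle := hanti.le_hausdorffMeasure_image zero_le_one Set.univ
  rw [hausdorffMeasure_real, Set.image_univ, Set.range_domRestrict, ENNReal.rpow_one,
    ← isometry_subtype_coe.hausdorffMeasure_image (Or.inl zero_le_one), Set.image_univ,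
    Subtype.range_coe] at hle
  calc ENNReal.ofReal c * μH[1] A
      ≤ ENNReal.ofReal c * (ENNReal.ofReal c⁻¹ * volume (f '' A)) := by gcongr; exact hle
    _ = volume (f '' A) := by
      rw [← mul_assoc, ← ENNReal.ofReal_mul hc.le, mul_inv_cancel₀ hc.ne', ENNReal.ofReal_one,
        one_mul]

theorem integral_abs_cos_sub (α : ℝ) : ∫ θ in (0 : ℝ)..Real.pi, |Real.cos (θ - α)| = 2 := by
  have hper : Function.Periodic (fun θ => |Real.cos θ|) Real.pi := fun θ => by
    simp [Real.cos_add_pi]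
  rw [intervalIntegral.integral_comp_sub_right (fun θ => |Real.cos θ|) α]
  have h := hper.intervalIntegral_add_eq (0 - α) (-(Real.pi / 2))
  rw [show 0 - α + Real.pi = Real.pi - α by ring,
    show -(Real.pi / 2) + Real.pi = Real.pi / 2 by ring] at h
  rw [h, intervalIntegral.integral_congr (g := Real.cos), integral_cos]
  · simp; norm_num
  · intro θ hθ
    rw [Set.uIcc_of_le (by linarith [Real.pi_pos])] at hθ
    exact abs_of_nonneg (Real.cos_nonneg_of_mem_Icc hθ)

theorem le_lintegral_abs_cos_sub (α ε : ℝ) :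
    ENNReal.ofReal (2 - 2 * ε * Real.pi) ≤
      ∫⁻ θ in Set.Ioc 0 Real.pi, ENNReal.ofReal (|Real.cos (θ - α)| - 2 * ε) := by
  have hint : Integrable (fun θ => |Real.cos (θ - α)| - 2 * ε)
      (volume.restrict (Set.Ioc 0 Real.pi)) :=
    (Continuous.integrableOn_Ioc (by fun_prop))
  have hval : ∫ θ in Set.Ioc 0 Real.pi, (|Real.cos (θ - α)| - 2 * ε) = 2 - 2 * ε * Real.pi := by
    rw [← intervalIntegral.integral_of_le Real.pi_pos.le, intervalIntegral.integral_sub,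
      integral_abs_cos_sub]
    · simp; ring
    · exact (Continuous.intervalIntegrable (by fun_prop) _ _)
    · simp
  rw [← hval]
  refine ENNReal.ofReal_le_of_le_toReal ?_
  rw [integral_eq_lintegral_pos_part_sub_lintegral_neg_part hint]
  exact sub_le_self _ ENNReal.toReal_nonneg

/-- The restriction of a polynomial to the line `{x | planeProj θ x = p}`, parametrised by the
coordinate along the line. -/
noncomputable def lineRestriction (P : MvPolynomial (Fin 2) ℝ) (θ p : ℝ) : Polynomial ℝ :=
  MvPolynomial.aeval ![Polynomial.C (Real.cos θ * p) - Polynomial.C (Real.sin θ) * Polynomial.X,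
    Polynomial.C (Real.sin θ * p) + Polynomial.C (Real.cos θ) * Polynomial.X] P

theorem eval_lineRestriction (P : MvPolynomial (Fin 2) ℝ) (θ p t : ℝ) :
    (lineRestriction P θ p).eval t = MvPolynomial.eval
      ![Real.cos θ * p - Real.sin θ * t, Real.sin θ * p + Real.cos θ * t] P := by
  rw [lineRestriction, ← Polynomial.coe_evalRingHom, ← MvPolynomial.eval₂_id,
    MvPolynomial.aeval_def, MvPolynomial.hom_eval₂]
  congr 1
  · ext; simp
  · ext j; fin_cases j <;> simp

theorem natDegree_lineRestriction_le {P : MvPolynomial (Fin 2) ℝ} {d : ℕ}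
    (hd : P.totalDegree ≤ d) (θ p : ℝ) : (lineRestriction P θ p).natDegree ≤ d := by
  refine (MvPolynomial.aeval_natDegree_le P hd _ (n := 1) fun j => ?_).trans (by simp)
  fin_cases j <;>
    simp only [Fin.mk_one, Fin.zero_eta, Matrix.cons_val_zero, Matrix.cons_val_one] <;>
    compute_degree

theorem eval_lineRestriction_planeProj (P : MvPolynomial (Fin 2) ℝ) (θ : ℝ) (x : Plane) :
    (lineRestriction P θ (planeProj θ x)).eval (planeProj (θ + Real.pi / 2) x) =
      MvPolynomial.eval (fun j => x j) P := by
  rw [eval_lineRestriction]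
  congr 2
  ext j
  fin_cases j
  · simp [planeProj, Real.cos_add_pi_div_two, Real.sin_add_pi_div_two]
    linear_combination x 0 * Real.sin_sq_add_cos_sq θ
  · simp [planeProj, Real.cos_add_pi_div_two, Real.sin_add_pi_div_two]
    linear_combination x 1 * Real.sin_sq_add_cos_sq θ

theorem finite_setOf_lineRestriction_eq_zero {P : MvPolynomial (Fin 2) ℝ} (hP : P ≠ 0) (θ : ℝ) :
    {p | lineRestriction P θ p = 0}.Finite := by
  obtain ⟨x, hx⟩ : ∃ x : Fin 2 → ℝ, MvPolynomial.eval x P ≠ 0 := by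
    by_contra! h
    exact hP (MvPolynomial.funext fun x => by simpa using h x)
  set y : Plane := WithLp.toLp 2 x
  set t := planeProj (θ + Real.pi / 2) y with ht
  have key : ∀ p, (lineRestriction P (θ + Real.pi / 2) t).eval (-p)
      = (lineRestriction P θ p).eval t := fun p => by
    rw [eval_lineRestriction, eval_lineRestriction]
    congr 2
    ext j
    fin_cases j <;> simp [Real.cos_add_pi_div_two, Real.sin_add_pi_div_two] <;> ring
  have hne : lineRestriction P (θ + Real.pi / 2) t ≠ 0 := fun h => by
    have h1 := eval_lineRestriction_planeProj P θ y
    rw [← ht, ← key, h, Polynomial.eval_zero] at h1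
    exact hx h1.symm
  refine ((Polynomial.finite_setOfPred_isRoot hne).preimage
    (neg_injective.injOn)).subset fun p hp => ?_
  have hp' : lineRestriction P θ p = 0 := hp
  have := key p
  rw [hp', Polynomial.eval_zero] at this
  exact this

theorem tsum_indicator_image_planeProj_le {P : MvPolynomial (Fin 2) ℝ} {d : ℕ}
    (hd : P.totalDegree ≤ d) {A : ℕ → Set Plane} (hdisj : Pairwise (Function.onFun Disjoint A))
    (hA : ∀ i, A i ⊆ planeZeros P) {θ p : ℝ} (hp : lineRestriction P θ p ≠ 0) :
    ∑' i, (planeProj θ '' A i).indicator (1 : ℝ → ENNReal) p ≤ d := by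
  classical
  rw [ENNReal.tsum_eq_iSup_sum]
  refine iSup_le fun s => ?_
  simp only [Set.indicator_apply, Pi.one_apply, Finset.sum_boole]
  refine Nat.cast_le.2 (le_trans ?_ ((Polynomial.card_roots' _).trans
    (natDegree_lineRestriction_le hd θ p)))
  refine le_trans ?_ (Multiset.toFinset_card_le _)
  have hx : ∀ i, ∃ x : Plane, p ∈ planeProj θ '' A i → x ∈ A i ∧ planeProj θ x = p := by
    intro i
    by_cases h : p ∈ planeProj θ '' A i
    · obtain ⟨x, hx⟩ := h
      exact ⟨x, fun _ => hx⟩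
    · exact ⟨0, fun h' => absurd h' h⟩
  choose x hx using hx
  refine Finset.card_le_card_of_injOn (fun i => planeProj (θ + Real.pi / 2) (x i)) ?_ ?_
  · intro i hi
    obtain ⟨hi1, hi2⟩ := hx i (Finset.mem_filter.1 hi).2
    rw [Finset.mem_coe, Multiset.mem_toFinset, Polynomial.mem_roots hp, Polynomial.IsRoot]
    have := eval_lineRestriction_planeProj P θ (x i)
    rw [hi2] at this
    exact this.trans (hA i hi1)
  · intro i hi j hj hij
    obtain ⟨hi1, hi2⟩ := hx i (Finset.mem_filter.1 hi).2
    obtain ⟨hj1, hj2⟩ := hx j (Finset.mem_filter.1 hj).2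
    have hsq : ‖x i - x j‖ ^ 2 = planeProj θ (x i - x j) ^ 2
        + planeProj (θ + Real.pi / 2) (x i - x j) ^ 2 := by
      rw [sq_norm_plane, planeProj, planeProj, Real.cos_add_pi_div_two, Real.sin_add_pi_div_two]
      linear_combination -((x i - x j) 0 ^ 2 + (x i - x j) 1 ^ 2) * Real.sin_sq_add_cos_sq θ
    have hij' : planeProj (θ + Real.pi / 2) (x i) = planeProj (θ + Real.pi / 2) (x j) := hij
    have heq : x i = x j := by
      rw [planeProj_sub, planeProj_sub, hi2, hj2, hij'] at hsq
      simpa [sub_eq_zero] using hsq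
    by_contra hne
    exact Set.disjoint_left.1 (hdisj hne) hi1 (heq ▸ hj1)

theorem tsum_ofReal_abs_cos_mul_hausdorffMeasure_le {P : MvPolynomial (Fin 2) ℝ} (hP : P ≠ 0)
    {d : ℕ} (hd : P.totalDegree ≤ d) {ε : ℝ} {α : ℕ → ℝ} {A : ℕ → Set Plane}
    (hm : ∀ i, MeasurableSet (A i)) (hflat : ∀ i, IsFlat ε (α i) (A i))
    (hdisj : Pairwise (Function.onFun Disjoint A)) (hA : ∀ i, A i ⊆ planeZeros P)
    (hball : ∀ i, A i ⊆ Metric.closedBall 0 1) (θ : ℝ) :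
    ∑' i, ENNReal.ofReal (|Real.cos (θ - α i)| - 2 * ε) * μH[1] (A i) ≤ d * 2 := by
  classical
  set s : ℕ → Set ℝ := fun i =>
    if 0 < |Real.cos (θ - α i)| - 2 * ε then planeProj θ '' A i else ∅ with hs
  have hsub : ∀ i, s i ⊆ planeProj θ '' A i := fun i => by
    simp only [hs]; split_ifs <;> simp
  have hsm : ∀ i, MeasurableSet (s i) := fun i => by
    simp only [hs]
    split_ifs with h
    · refine (hm i).image_of_continuousOn_injOn (continuous_planeProj θ).continuousOn
        fun x hx y hy hxy => ?_
      have hle := (hflat i).mul_norm_sub_le θ hx hy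
      rw [hxy, sub_self, abs_zero] at hle
      have h0 : ‖x - y‖ ≤ 0 := nonpos_of_mul_nonpos_right hle h
      rwa [norm_le_zero_iff, sub_eq_zero] at h0
    · exact MeasurableSet.empty
  have hterm : ∀ i, ENNReal.ofReal (|Real.cos (θ - α i)| - 2 * ε) * μH[1] (A i) ≤
      ∫⁻ p, (s i).indicator 1 p := fun i => by
    rw [lintegral_indicator_one (hsm i)]
    simp only [hs]
    split_ifs with h
    · refine ofReal_mul_hausdorffMeasure_le_of_antilipschitzOn h fun x hx y hy => ?_
      rw [dist_eq_norm]
      exact (hflat i).mul_norm_sub_le θ hx hy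
    · rw [ENNReal.ofReal_of_nonpos (not_lt.1 h), zero_mul]
      exact zero_le
  calc ∑' i, ENNReal.ofReal (|Real.cos (θ - α i)| - 2 * ε) * μH[1] (A i)
      ≤ ∑' i, ∫⁻ p, (s i).indicator 1 p := ENNReal.tsum_le_tsum hterm
    _ = ∫⁻ p, ∑' i, (s i).indicator 1 p :=
      (lintegral_tsum fun i => (measurable_one.indicator (hsm i)).aemeasurable).symm
    _ ≤ ∫⁻ p, (Set.Icc (-1 : ℝ) 1).indicator (fun _ => (d : ENNReal)) p := by
      refine lintegral_mono_ae ?_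
      filter_upwards [(finite_setOf_lineRestriction_eq_zero hP θ).countable.ae_notMem volume]
        with p hp
      by_cases hpI : p ∈ Set.Icc (-1 : ℝ) 1
      · rw [Set.indicator_of_mem hpI]
        refine le_trans (ENNReal.tsum_le_tsum fun i => ?_)
          (tsum_indicator_image_planeProj_le hd hdisj hA hp)
        exact Set.indicator_le_indicator_of_subset (hsub i) (fun _ => zero_le) p
      · rw [Set.indicator_of_notMem hpI]
        refine (ENNReal.tsum_eq_zero.2 fun i => Set.indicator_of_notMem (fun hpi => hpI ?_) _).le
        obtain ⟨x, hx, rfl⟩ := hsub i hpi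
        exact abs_le.1 ((abs_planeProj_le_norm θ x).trans (mem_closedBall_zero_iff.1 (hball i hx)))
    _ = d * 2 := by
      rw [lintegral_indicator_const measurableSet_Icc, Real.volume_Icc]
      norm_num

theorem HasFlatCover.exists_disjoint_seq {ε : ℝ} {E : Set Plane} (hE : HasFlatCover ε E)
    (hm : MeasurableSet E) :
    ∃ (A : ℕ → Set Plane) (α : ℕ → ℝ), (∀ i, MeasurableSet (A i)) ∧
      (∀ i, IsFlat ε (α i) (A i)) ∧ Pairwise (Function.onFun Disjoint A) ∧ ⋃ i, A i = E := by
  obtain ⟨S, hS, hSf, hSc⟩ := hE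
  obtain ⟨B, hB⟩ := (hS.insert ∅).exists_eq_range (Set.insert_nonempty _ _)
  have hBf : ∀ i, MeasurableSet (B i) ∧ ∃ α, IsFlat ε α (B i) := fun i => by
    have hi : B i ∈ insert ∅ S := hB ▸ Set.mem_range_self i
    rcases hi with hi | hi
    · rw [hi]
      exact ⟨MeasurableSet.empty, 0, fun x hx => absurd hx (Set.notMem_empty x)⟩
    · exact hSf _ hi
  choose hBm α hα using hBf
  refine ⟨fun i => E ∩ disjointed B i, α, fun i => hm.inter (MeasurableSet.disjointed hBm i),
    fun i => (hα i).mono (Set.inter_subset_right.trans (disjointed_subset B i)),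
    fun i j hij => (disjoint_disjointed B hij).mono Set.inter_subset_right Set.inter_subset_right,
    ?_⟩
  rw [← Set.inter_iUnion, iUnion_disjointed, Set.inter_eq_left]
  intro x hx
  obtain ⟨C, hC, hxC⟩ := hSc hx
  have hC' : C ∈ Set.range B := hB ▸ Set.mem_insert_of_mem _ hC
  obtain ⟨i, rfl⟩ := hC'
  exact Set.mem_iUnion.2 ⟨i, hxC⟩

theorem ofReal_mul_hausdorffMeasure_planeZeros_le {P : MvPolynomial (Fin 2) ℝ} (hP : P ≠ 0)
    {d : ℕ} (hd : P.totalDegree ≤ d) {ε : ℝ} (hε : 0 < ε) :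
    ENNReal.ofReal (2 - 2 * ε * Real.pi) * μH[1] (Metric.closedBall 0 1 ∩ planeZeros P) ≤
      d * 2 * ENNReal.ofReal Real.pi := by
  obtain ⟨A, α, hm, hflat, hdisj, hU⟩ :=
    ((hasFlatCover_planeZeros hε P hP).mono Set.inter_subset_right).exists_disjoint_seq
      (Metric.isClosed_closedBall.measurableSet.inter (measurableSet_planeZeros P))
  have hsub : ∀ i, A i ⊆ Metric.closedBall 0 1 ∩ planeZeros P := fun i =>
    hU ▸ Set.subset_iUnion A i
  calc ENNReal.ofReal (2 - 2 * ε * Real.pi) * μH[1] (Metric.closedBall 0 1 ∩ planeZeros P)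
      ≤ ENNReal.ofReal (2 - 2 * ε * Real.pi) * ∑' i, μH[1] (A i) := by
        rw [← hU]
        gcongr
        exact measure_iUnion_le A
    _ = ∑' i, ENNReal.ofReal (2 - 2 * ε * Real.pi) * μH[1] (A i) := ENNReal.tsum_mul_left.symm
    _ ≤ ∑' i, ∫⁻ θ in Set.Ioc 0 Real.pi,
          ENNReal.ofReal (|Real.cos (θ - α i)| - 2 * ε) * μH[1] (A i) := by
        refine ENNReal.tsum_le_tsum fun i => ?_
        rw [lintegral_mul_const _ (by fun_prop)]
        gcongr
        exact le_lintegral_abs_cos_sub (α i) ε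
    _ = ∫⁻ θ in Set.Ioc 0 Real.pi,
          ∑' i, ENNReal.ofReal (|Real.cos (θ - α i)| - 2 * ε) * μH[1] (A i) :=
        (lintegral_tsum fun i => by fun_prop).symm
    _ ≤ ∫⁻ _ in Set.Ioc 0 Real.pi, (d * 2 : ENNReal) :=
        lintegral_mono fun θ => tsum_ofReal_abs_cos_mul_hausdorffMeasure_le hP hd hm hflat hdisj
          (fun i => (hsub i).trans Set.inter_subset_right)
          (fun i => (hsub i).trans Set.inter_subset_left) θ
    _ = d * 2 * ENNReal.ofReal Real.pi := by
        rw [setLIntegral_const, Real.volume_Ioc, sub_zero]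

/-- A real algebraic curve of degree `d` intersected with the closed
unit disk has 1-dimensional Hausdorff measure (length) at most `π d`. -/
theorem stmt13 (d : ℕ) (hd : 1 ≤ d) (P : MvPolynomial (Fin 2) ℝ) (hP : P ≠ 0)
    (hdeg : P.totalDegree ≤ d) :
    μH[1] {x : EuclideanSpace ℝ (Fin 2) | ‖x‖ ≤ 1 ∧ MvPolynomial.eval (fun j => x j) P = 0}
      ≤ ENNReal.ofReal (Real.pi * d) := by
  have hset : {x : Plane | ‖x‖ ≤ 1 ∧ MvPolynomial.eval (fun j => x j) P = 0} =
      Metric.closedBall 0 1 ∩ planeZeros P := by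
    ext x
    simp [planeZeros]
  rw [hset]
  have hlim : Filter.Tendsto (fun ε : ℝ => ENNReal.ofReal (2 - 2 * ε * Real.pi) *
      μH[1] (Metric.closedBall 0 1 ∩ planeZeros P)) (nhdsWithin 0 (Set.Ioi 0))
      (nhds (2 * μH[1] (Metric.closedBall 0 1 ∩ planeZeros P))) := by
    refine ENNReal.Tendsto.mul_const ?_ (Or.inl two_ne_zero)
    have hc : Continuous fun ε : ℝ => ENNReal.ofReal (2 - 2 * ε * Real.pi) :=
      ENNReal.continuous_ofReal.comp (by fun_prop)
    simpa using (hc.tendsto 0).mono_left nhdsWithin_le_nhds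
  have hle := le_of_tendsto hlim (by
    filter_upwards [self_mem_nhdsWithin] with ε hε
    exact ofReal_mul_hausdorffMeasure_planeZeros_le hP hdeg hε)
  rw [mul_comm (d : ENNReal) 2, mul_assoc,
    ENNReal.mul_le_mul_iff_right two_ne_zero ENNReal.ofNat_ne_top] at hle
  rwa [mul_comm Real.pi, ENNReal.ofReal_mul (Nat.cast_nonneg d), ENNReal.ofReal_natCast]
end

section
/- For every integer n ≥ 2 there is a constant C(n) such that for every integer d ≥ 1 and every real polynomial P in n variables of total degree at most d which is not identically zero, the (n−1)-dimensional Hausdorff measure of the set {x ∈ ℝⁿ : |x| ≤ 1 and P(x) = 0} is at most C(n)·d. -/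
open MeasureTheory
open scoped NNReal ENNReal Topology

namespace MvPolynomial

theorem exists_pderiv_ne_zero_totalDegree_lt {σ R : Type*} [CommSemiring R] [NoZeroDivisors R]
    [CharZero R] {P : MvPolynomial σ R} (hP : P.totalDegree ≠ 0) :
    ∃ i, pderiv i P ≠ 0 ∧ (pderiv i P).totalDegree < P.totalDegree := by
  classical
  obtain ⟨s, hs, i, hi⟩ : ∃ s ∈ P.support, ∃ i, s i ≠ 0 := by
    by_contra! h
    refine hP ((totalDegree_eq_zero_iff _ P).2 fun s hs i => h s hs i)
  refine ⟨i, fun h => ?_, ?_⟩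
  · have h1 := coeff_pderiv (i := i) P (s - Finsupp.single i 1)
    have h2 : s - Finsupp.single i 1 + Finsupp.single i 1 = s :=
      tsub_add_cancel_of_le (Finsupp.single_le_iff.2 (Nat.one_le_iff_ne_zero.2 hi))
    rw [h, h2, coeff_zero] at h1
    have h3 : coeff s P ≠ 0 := mem_support_iff.1 hs
    rcases mul_eq_zero.1 h1.symm with h4 | h4
    · exact h3 h4
    · norm_cast at h4
  · refine (Finset.sup_lt_iff (Nat.pos_of_ne_zero hP)).2 fun t ht => ?_
    have h1 : coeff (t + Finsupp.single i 1) P ≠ 0 := fun h => by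
      simp [coeff_pderiv, h] at ht
    have h2 := le_totalDegree (mem_support_iff.2 h1)
    rw [Finsupp.sum_add_index' (by simp) (by simp), Finsupp.sum_single_index rfl] at h2
    exact h2

theorem hasStrictFDerivAt_eval {ι : Type*} [Fintype ι] (P : MvPolynomial ι ℝ) (x : ι → ℝ) :
    HasStrictFDerivAt (fun y => eval y P)
      (∑ j, eval x (pderiv j P) • (ContinuousLinearMap.proj j : (ι → ℝ) →L[ℝ] ℝ)) x := by
  classical
  induction P using MvPolynomial.induction_on with
  | C a => simpa using hasStrictFDerivAt_const a x
  | add p q hp hq =>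
    simpa [add_smul, Finset.sum_add_distrib] using hp.fun_add hq
  | mul_X p i hp =>
    have h := hp.fun_mul (ContinuousLinearMap.proj i : (ι → ℝ) →L[ℝ] ℝ).hasStrictFDerivAt (x := x)
    have hfun : (fun y => eval y (p * X i)) = fun y => eval y p * y i := by ext y; simp
    rw [hfun]
    refine h.congr_fderiv ?_
    ext v
    simp only [pderiv_mul, pderiv_X, Pi.single_apply, map_add, map_mul, eval_X, sum_apply,
      add_apply, smul_apply, ContinuousLinearMap.proj_apply, smul_eq_mul, add_mul,
      Finset.sum_add_distrib, Finset.mul_sum, apply_ite (eval x), map_zero, mul_ite,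
      ite_mul, mul_one, mul_zero, zero_mul, Finset.sum_ite_eq, Finset.mem_univ, if_true]
    rw [add_comm]
    congr 1
    exact Finset.sum_congr rfl fun j _ => by ring

end MvPolynomial

open MvPolynomial

/-- Near a zero of `P` at which some partial derivative does not vanish, the zero set of `P` is a
Lipschitz graph in some coordinate direction. -/
theorem exists_mem_nhds_antilipschitzWith_removeNth {m : ℕ} (P : MvPolynomial (Fin (m + 1)) ℝ)
    {x : Fin (m + 1) → ℝ} {i : Fin (m + 1)} (hi : eval x (pderiv i P) ≠ 0) :
    ∃ j : Fin (m + 1), ∃ U ∈ 𝓝 x, AntilipschitzWith (2 * m + 1)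
      (({y | eval y P = 0} ∩ U).domRestrict (j.removeNth : (Fin (m + 1) → ℝ) → Fin m → ℝ)) := by
  obtain ⟨j, -, hj⟩ := Finset.exists_max_image Finset.univ (fun j => |eval x (pderiv j P)|)
    ⟨i, by simp⟩
  set a := fun j => eval x (pderiv j P)
  have hM : 0 < |a j| := (abs_pos.2 hi).trans_le (hj i (by simp))
  have hd := (hasStrictFDerivAt_eval P x).isLittleO.def (half_pos hM)
  rw [nhds_prod_eq] at hd
  obtain ⟨U, hU, hUd⟩ := Filter.mem_prod_same_iff.1 hd
  refine ⟨j, U, hU, AntilipschitzWith.of_le_mul_dist ?_⟩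
  rintro ⟨y, hyP, hyU⟩ ⟨z, hzP, hzU⟩
  have h := hUd (Set.mk_mem_prod hyU hzU)
  simp only [Set.mem_ofPred_eq] at hyP hzP h
  change dist y z ≤ _ * dist (j.removeNth y) (j.removeNth z)
  simp only [dist_eq_norm]
  set v := y - z with hv
  have hw : j.removeNth y - j.removeNth z = (fun l => v (j.succAbove l)) := by
    ext l; simp [Fin.removeNth, hv]
  rw [hw]
  set w : Fin m → ℝ := fun l => v (j.succAbove l) with hwdef
  have hle : ‖v‖ ≤ max |v j| ‖w‖ := by
    refine (pi_norm_le_iff_of_nonneg (by positivity)).2 fun l => ?_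
    rcases Fin.eq_self_or_eq_succAbove j l with rfl | ⟨k, rfl⟩
    · exact le_max_left _ _
    · exact le_max_of_le_right (norm_le_pi_norm w k)
  have hsum : |∑ l, a (j.succAbove l) * w l| ≤ m * (|a j| * ‖w‖) := by
    refine (Finset.abs_sum_le_sum_abs _ _).trans ?_
    refine (Finset.sum_le_card_nsmul _ _ (|a j| * ‖w‖) fun l _ => ?_).trans (by simp)
    rw [abs_mul]
    exact mul_le_mul (hj _ (by simp)) (norm_le_pi_norm w l) (abs_nonneg _) hM.le
  rw [hyP, hzP] at h
  simp only [sub_zero, zero_sub, norm_neg, sum_apply,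
    smul_apply, ContinuousLinearMap.proj_apply, smul_eq_mul] at h
  rw [Fin.sum_univ_succAbove _ j, Real.norm_eq_abs] at h
  have h1 : |a j| * |v j| ≤ |a j| * (‖v‖ / 2 + m * ‖w‖) := by
    rw [← abs_mul]
    have := abs_sub_abs_le_abs_sub (a j * v j) (-∑ l, a (j.succAbove l) * w l)
    rw [sub_neg_eq_add, abs_neg] at this
    have h' : |a j * v j + ∑ l, a (j.succAbove l) * w l| ≤ |a j| / 2 * ‖v‖ := h
    linarith
  have h2 := le_of_mul_le_mul_left h1 hM
  have hw0 := norm_nonneg w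
  have hm : (0 : ℝ) ≤ m * ‖w‖ := by positivity
  push_cast
  rcases le_total |v j| ‖w‖ with h3 | h3
  · rw [max_eq_right h3] at hle
    nlinarith
  · rw [max_eq_left h3] at hle
    nlinarith

/-- The zero set of a nonzero polynomial is covered by countably many Lipschitz graphs in
coordinate directions. -/
theorem exists_countable_cover_antilipschitzWith_removeNth {m : ℕ}
    (P : MvPolynomial (Fin (m + 1)) ℝ) (hP : P ≠ 0) :
    ∃ T : Set (Fin (m + 1) × Set (Fin (m + 1) → ℝ)), T.Countable ∧
      (∀ p ∈ T, MeasurableSet p.2 ∧ AntilipschitzWith (2 * m + 1)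
        (p.2.domRestrict (p.1.removeNth : (Fin (m + 1) → ℝ) → Fin m → ℝ))) ∧
      {x | eval x P = 0} ⊆ ⋃ p ∈ T, p.2 := by
  induction hk : P.totalDegree using Nat.strong_induction_on generalizing P with
  | _ k ih =>
  subst hk
  by_cases h0 : P.totalDegree = 0
  · rw [totalDegree_eq_zero_iff_eq_C] at h0
    refine ⟨∅, Set.countable_empty, by simp, fun x hx => (hP ?_).elim⟩
    rw [Set.mem_ofPred_eq, h0, eval_C] at hx
    rw [h0, hx, C_0]
  obtain ⟨i, hi, hlt⟩ := exists_pderiv_ne_zero_totalDegree_lt h0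
  obtain ⟨T, hTc, hT, hTZ⟩ := ih _ hlt _ hi rfl
  let B := TopologicalSpace.countableBasis (Fin (m + 1) → ℝ)
  let T' : Set (Fin (m + 1) × Set (Fin (m + 1) → ℝ)) :=
    {p ∈ (fun q : Fin (m + 1) × Set (Fin (m + 1) → ℝ) => (q.1, {y | eval y P = 0} ∩ q.2)) ''
      (Set.univ ×ˢ B) | AntilipschitzWith (2 * m + 1)
        (p.2.domRestrict (p.1.removeNth : (Fin (m + 1) → ℝ) → Fin m → ℝ))}
  have hclosed : IsClosed {y | eval y P = 0} :=
    isClosed_eq (MvPolynomial.continuous_eval P) continuous_const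
  refine ⟨T ∪ T', hTc.union (((Set.countable_univ.prod
    (TopologicalSpace.countable_countableBasis _)).image _).mono (Set.sep_subset _ _)), ?_, ?_⟩
  · rintro p (hp | ⟨⟨q, hq, rfl⟩, hp⟩)
    · exact hT p hp
    · exact ⟨hclosed.measurableSet.inter
        (TopologicalSpace.isOpen_of_mem_countableBasis hq.2).measurableSet, hp⟩
  · intro x hx
    rw [Set.biUnion_union]
    by_cases hxi : eval x (pderiv i P) = 0
    · exact Or.inl (hTZ hxi)
    · right
      obtain ⟨j, U, hU, hj⟩ := exists_mem_nhds_antilipschitzWith_removeNth P hxi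
      obtain ⟨V, hV, hxV, hVU⟩ :=
        (TopologicalSpace.isBasis_countableBasis (Fin (m + 1) → ℝ)).mem_nhds_iff.1 hU
      refine Set.mem_biUnion (x := (j, {y | eval y P = 0} ∩ V)) ⟨⟨(j, V), ⟨trivial, hV⟩, rfl⟩, ?_⟩
        ⟨hx, hxV⟩
      intro y z
      exact hj ⟨y, y.2.1, hVU y.2.2⟩ ⟨z, z.2.1, hVU z.2.2⟩

theorem hausdorffMeasure_le_of_antilipschitzWith_domRestrict {X Y : Type*} [MetricSpace X]
    [MeasurableSpace X] [BorelSpace X] [MetricSpace Y] [MeasurableSpace Y] [BorelSpace Y]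
    {f : X → Y} {s : Set X} {K : ℝ≥0} {d : ℝ} (hd : 0 ≤ d)
    (hf : AntilipschitzWith K (s.domRestrict f)) :
    μH[d] s ≤ (K : ℝ≥0∞) ^ d * μH[d] (f '' s) := by
  have h := hf.le_hausdorffMeasure_image hd Set.univ
  rw [Set.image_univ, Set.range_domRestrict] at h
  rwa [← isometry_subtype_coe.hausdorffMeasure_image (Or.inl hd), Set.image_univ,
    Subtype.range_coe] at h

theorem volume_setOf_eval_eq_zero {m : ℕ} {P : MvPolynomial (Fin (m + 1)) ℝ} (hP : P ≠ 0) :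
    volume {x : Fin (m + 1) → ℝ | eval x P = 0} = 0 := by
  obtain ⟨T, hTc, hT, hTZ⟩ := exists_countable_cover_antilipschitzWith_removeNth P hP
  refine measure_mono_null hTZ ((measure_biUnion_null_iff hTc).2 fun p hp => ?_)
  have h := hausdorffMeasure_le_of_antilipschitzWith_domRestrict
    (d := ((m + 1 : ℕ) : ℝ≥0)) (by positivity) (hT p hp).2
  have h0 : (μH[((m + 1 : ℕ) : ℝ≥0)] : Measure (Fin m → ℝ)) = 0 := by
    refine Measure.measure_univ_eq_zero.1 (hausdorffMeasure_of_dimH_lt ?_)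
    rw [Real.dimH_univ_pi_fin]
    norm_cast
    simp
  rw [h0] at h
  rw [← hausdorffMeasure_pi_real]
  simpa using h

/-- Almost every line in a coordinate direction meets the zero set of a nonzero polynomial in at
most as many points as the degree of the polynomial. -/
theorem ae_encard_setOf_eval_insertNth_le {m : ℕ} {P : MvPolynomial (Fin (m + 1)) ℝ} (hP : P ≠ 0)
    (i : Fin (m + 1)) :
    ∀ᵐ y : Fin m → ℝ, {t : ℝ | eval (i.insertNth t y : Fin (m + 1) → ℝ) P = 0}.encard
      ≤ P.totalDegree := by
  have h1 : ∀ᵐ x : Fin (m + 1) → ℝ, eval x P ≠ 0 := by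
    rw [ae_iff]; simpa using volume_setOf_eval_eq_zero hP
  have h2 := (volume_preserving_piFinSuccAbove
    (fun _ : Fin (m + 1) => ℝ) i).symm.quasiMeasurePreserving.ae h1
  have h3 : ∀ᵐ p : (Fin m → ℝ) × ℝ, eval (i.insertNth p.2 p.1 : Fin (m + 1) → ℝ) P ≠ 0 :=
    (Measure.measurePreserving_swap (μ := (volume : Measure (Fin m → ℝ)))
      (ν := (volume : Measure ℝ))).quasiMeasurePreserving.ae h2
  filter_upwards [Measure.ae_ae_of_ae_prod h3] with y hy
  obtain ⟨t₀, ht₀⟩ := hy.exists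
  set p : Polynomial ℝ :=
    aeval (i.insertNth Polynomial.X (fun l => Polynomial.C (y l)) : Fin (m + 1) → Polynomial ℝ) P
  have hp : ∀ t, p.eval t = eval (i.insertNth t y : Fin (m + 1) → ℝ) P := by
    intro t
    rw [← Polynomial.coe_evalRingHom, ← Polynomial.coe_aeval_eq_evalRingHom, ← aeval_eq_eval]
    change Polynomial.aeval t (aeval _ P) = aeval _ P
    rw [← AlgHom.comp_apply, comp_aeval]
    congr 2
    ext l
    rcases Fin.eq_self_or_eq_succAbove i l with rfl | ⟨k, rfl⟩ <;> simp
  have hp0 : p ≠ 0 := fun h => ht₀ (by simp [← hp, h])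
  have hdeg : p.natDegree ≤ P.totalDegree := by
    have := aeval_natDegree_le P le_rfl
      (i.insertNth Polynomial.X (fun l => Polynomial.C (y l)) : Fin (m + 1) → Polynomial ℝ)
      (n := 1) (fun l => by
        rcases Fin.eq_self_or_eq_succAbove i l with rfl | ⟨k, rfl⟩ <;> simp)
    simpa using this
  have hset : {t : ℝ | eval (i.insertNth t y : Fin (m + 1) → ℝ) P = 0} = p.roots.toFinset := by
    ext t; simp [hp0, hp]
  rw [hset, Set.encard_coe_eq_coe_finsetCard]
  exact_mod_cast (Multiset.toFinset_card_le _).trans ((Polynomial.card_roots' p).trans hdeg)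

/-- The total volume of the projections of disjoint graph pieces of the zero set of `P` is controlled
by the number of zeros of `P` on coordinate lines. -/
theorem tsum_volume_image_removeNth_le {m : ℕ} {P : MvPolynomial (Fin (m + 1)) ℝ} (hP : P ≠ 0)
    (i : Fin (m + 1)) {ι : Type*} [Countable ι] {A : ι → Set (Fin (m + 1) → ℝ)}
    (hA : ∀ k, MeasurableSet (A k)) (hdisj : Pairwise (Function.onFun Disjoint A))
    (hinj : ∀ k, Set.InjOn (i.removeNth : (Fin (m + 1) → ℝ) → Fin m → ℝ) (A k))
    (hAZ : ∀ k, A k ⊆ {x | ‖x‖ ≤ 1 ∧ eval x P = 0}) :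
    ∑' k, volume ((i.removeNth : (Fin (m + 1) → ℝ) → Fin m → ℝ) '' A k)
      ≤ P.totalDegree * 2 ^ m := by
  set π : (Fin (m + 1) → ℝ) → Fin m → ℝ := i.removeNth
  have hπ : Continuous π := continuous_pi fun l => continuous_apply _
  have hmeas : ∀ k, MeasurableSet (π '' A k) := fun k =>
    (hA k).image_of_continuousOn_injOn hπ.continuousOn (hinj k)
  calc ∑' k, volume (π '' A k) = ∑' k, ∫⁻ y, (π '' A k).indicator 1 y := by
        simp_rw [lintegral_indicator_one (hmeas _)]
    _ = ∫⁻ y, ∑' k, (π '' A k).indicator 1 y :=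
        (lintegral_tsum fun k => (measurable_one.indicator (hmeas k)).aemeasurable).symm
    _ ≤ ∫⁻ y, (Metric.closedBall (0 : Fin m → ℝ) 1).indicator
          (fun _ => (P.totalDegree : ℝ≥0∞)) y := by
        refine lintegral_mono_ae ?_
        filter_upwards [ae_encard_setOf_eval_insertNth_le hP i] with y hy
        have hsum : ∑' k, (π '' A k).indicator (1 : (Fin m → ℝ) → ℝ≥0∞) y
            = ({k | y ∈ π '' A k}.encard : ℝ≥0∞) := by
          rw [← ENNReal.tsum_set_one, tsum_subtype {k | y ∈ π '' A k} (fun _ => (1 : ℝ≥0∞))]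
          rfl
        have hins : ∀ k, y ∈ π '' A k → ∃ t : ℝ, (i.insertNth t y : Fin (m + 1) → ℝ) ∈ A k := by
          rintro k ⟨x, hx, rfl⟩
          exact ⟨x i, by simpa [π] using hx⟩
        rw [hsum]
        by_cases hyb : y ∈ Metric.closedBall (0 : Fin m → ℝ) 1
        · rw [Set.indicator_of_mem hyb]
          choose! t ht using hins
          have := Set.encard_le_encard_of_injOn
            (s := {k | y ∈ π '' A k})
            (t := {t : ℝ | eval (i.insertNth t y : Fin (m + 1) → ℝ) P = 0}) (f := t)
            (fun k hk => (hAZ k (ht k hk)).2) (fun k hk l hl hkl => by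
              by_contra hne
              have h1 := ht l hl
              rw [← hkl] at h1
              exact Set.disjoint_left.1 (hdisj hne) (ht k hk) h1)
          exact_mod_cast this.trans hy
        · have : {k | y ∈ π '' A k} = ∅ := by
            ext k
            simp only [Set.mem_ofPred_eq, Set.mem_empty_iff_false, iff_false]
            rintro ⟨x, hx, rfl⟩
            refine hyb (mem_closedBall_zero_iff.2 ?_)
            exact (pi_norm_le_iff_of_nonneg zero_le_one).2 fun l =>
              (norm_le_pi_norm x _).trans (hAZ k hx).1
          rw [this, Set.encard_empty]
          simp
    _ = P.totalDegree * 2 ^ m := by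
        rw [lintegral_indicator_const Metric.isClosed_closedBall.measurableSet,
          Real.volume_pi_closedBall _ zero_le_one]
        simp

/-- The volume bound for zero sets of polynomials in the unit ball of the sup norm. -/
theorem hausdorffMeasure_setOf_eval_eq_zero_le {m : ℕ} {P : MvPolynomial (Fin (m + 1)) ℝ}
    (hP : P ≠ 0) :
    μH[m] {x : Fin (m + 1) → ℝ | ‖x‖ ≤ 1 ∧ eval x P = 0}
      ≤ (2 * m + 1) ^ m * ((m + 1) * (P.totalDegree * 2 ^ m)) := by
  classical
  obtain ⟨T, hTc, hT, hTZ⟩ := exists_countable_cover_antilipschitzWith_removeNth P hP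
  set Z := {x : Fin (m + 1) → ℝ | ‖x‖ ≤ 1 ∧ eval x P = 0}
  have hZ : MeasurableSet Z := ((isClosed_le continuous_norm continuous_const).inter
    (isClosed_eq (MvPolynomial.continuous_eval P) continuous_const)).measurableSet
  rcases T.eq_empty_or_nonempty with rfl | hne
  · have : Z = ∅ := Set.eq_empty_of_forall_notMem fun x hx => by simpa using hTZ hx.2
    simp [this]
  obtain ⟨f, rfl⟩ := hTc.exists_eq_range hne
  set A : ℕ → Set (Fin (m + 1) → ℝ) := fun k => disjointed (fun k => (f k).2) k ∩ Z
  have hAm : ∀ k, MeasurableSet (A k) := fun k =>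
    (MeasurableSet.disjointed (fun k => (hT _ ⟨k, rfl⟩).1) k).inter hZ
  have hAd : Pairwise (Function.onFun Disjoint A) := fun k l hkl =>
    (disjoint_disjointed _ hkl).mono Set.inter_subset_left Set.inter_subset_left
  have hAlip : ∀ k, AntilipschitzWith (2 * m + 1)
      ((A k).domRestrict ((f k).1.removeNth : (Fin (m + 1) → ℝ) → Fin m → ℝ)) := fun k y z =>
    (hT _ ⟨k, rfl⟩).2 ⟨y, disjointed_subset _ k y.2.1⟩ ⟨z, disjointed_subset _ k z.2.1⟩
  have hAinj : ∀ k, Set.InjOn ((f k).1.removeNth : (Fin (m + 1) → ℝ) → Fin m → ℝ) (A k) :=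
    fun k => Set.injOn_iff_injective.2 (hAlip k).injective
  have hZA : Z ⊆ ⋃ k, A k := by
    intro x hx
    have h := hTZ hx.2
    rw [Set.biUnion_range, ← iUnion_disjointed] at h
    obtain ⟨k, hk⟩ := Set.mem_iUnion.1 h
    exact Set.mem_iUnion.2 ⟨k, hk, hx⟩
  calc μH[m] Z ≤ ∑' k, μH[m] (A k) := (measure_mono hZA).trans (measure_iUnion_le _)
    _ ≤ ∑' k, (2 * m + 1) ^ m *
          volume (((f k).1.removeNth : (Fin (m + 1) → ℝ) → Fin m → ℝ) '' A k) := by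
        refine ENNReal.tsum_le_tsum fun k => ?_
        have h := hausdorffMeasure_le_of_antilipschitzWith_domRestrict (Nat.cast_nonneg m) (hAlip k)
        have hv := hausdorffMeasure_pi_real (ι := Fin m)
        rw [Fintype.card_fin] at hv
        rw [hv] at h
        simpa using h
    _ = (2 * m + 1) ^ m * ∑ i : Fin (m + 1), ∑' k,
          volume ((i.removeNth : (Fin (m + 1) → ℝ) → Fin m → ℝ) ''
            (if (f k).1 = i then A k else ∅)) := by
        rw [ENNReal.tsum_mul_left, ← Summable.tsum_finsetSum fun _ _ => ENNReal.summable]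
        congr 2
        ext k
        rw [Finset.sum_eq_single (f k).1 (fun i _ hi => by simp [hi.symm]) (by simp)]
        simp
    _ ≤ (2 * m + 1) ^ m * ∑ _i : Fin (m + 1), (P.totalDegree : ℝ≥0∞) * 2 ^ m := by
        gcongr _ * ?_
        refine Finset.sum_le_sum fun i _ => ?_
        refine tsum_volume_image_removeNth_le hP i (fun k => ?_) (fun k l hkl => ?_) (fun k => ?_)
          fun k => ?_
        · split_ifs <;> simp [hAm k]
        · have h := hAd hkl
          simp only [Function.onFun] at h ⊢
          split_ifs <;> simp [h]
        · split_ifs with h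
          · exact h ▸ hAinj k
          · simp
        · split_ifs
          · exact Set.inter_subset_right
          · exact Set.empty_subset _
    _ = (2 * m + 1) ^ m * ((m + 1) * (P.totalDegree * 2 ^ m)) := by simp

/-- For every `n ≥ 2` there is `C(n)` such that every nonzero real
polynomial `P` in `n` variables of total degree at most `d` has zero set of
`(n-1)`-dimensional Hausdorff measure at most `C(n) d` inside the closed unit ball. -/
theorem stmt14 (n : ℕ) (hn : 2 ≤ n) :
    ∃ C : ℝ, ∀ d : ℕ, 1 ≤ d → ∀ P : MvPolynomial (Fin n) ℝ, P ≠ 0 →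
      P.totalDegree ≤ d →
      μH[(n : ℝ) - 1]
          {x : EuclideanSpace ℝ (Fin n) | ‖x‖ ≤ 1 ∧ MvPolynomial.eval (fun j => x j) P = 0}
        ≤ ENNReal.ofReal (C * d) := by
  obtain ⟨m, rfl⟩ : ∃ m, n = m + 1 := ⟨n - 1, by omega⟩
  set K : ℝ≥0 := (Fintype.card (Fin (m + 1)) : ℝ≥0) ^ (1 / (2 : ℝ≥0∞)).toReal
  set c : ℝ≥0 := K ^ m * ((2 * m + 1) ^ m * ((m + 1) * 2 ^ m)) with hc
  refine ⟨c, fun d _ P hP hPd => ?_⟩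
  have hm : (((m + 1 : ℕ) : ℝ) - 1) = m := by simp
  rw [hm]
  set Z := {x : EuclideanSpace ℝ (Fin (m + 1)) |
    ‖x‖ ≤ 1 ∧ MvPolynomial.eval (fun j => x j) P = 0}
  have hK : AntilipschitzWith K (WithLp.ofLp : EuclideanSpace ℝ (Fin (m + 1)) → _) :=
    PiLp.antilipschitzWith_ofLp 2 _
  have hsub : WithLp.ofLp '' Z ⊆ {x : Fin (m + 1) → ℝ | ‖x‖ ≤ 1 ∧ eval x P = 0} := by
    rintro _ ⟨x, ⟨hx, hxP⟩, rfl⟩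
    refine ⟨(pi_norm_le_iff_of_nonneg zero_le_one).2 fun l => ?_, hxP⟩
    exact (PiLp.norm_apply_le x l).trans hx
  calc μH[m] Z ≤ (K : ℝ≥0∞) ^ (m : ℝ) * μH[m] (WithLp.ofLp '' Z) :=
        hK.le_hausdorffMeasure_image (Nat.cast_nonneg m) Z
    _ ≤ (K : ℝ≥0∞) ^ m * ((2 * m + 1) ^ m * ((m + 1) * (d * 2 ^ m))) := by
        rw [ENNReal.rpow_natCast]
        gcongr
        refine ((measure_mono hsub).trans (hausdorffMeasure_setOf_eval_eq_zero_le hP)).trans ?_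
        gcongr
    _ = ENNReal.ofReal (c * d) := by
        rw [ENNReal.ofReal_mul c.coe_nonneg, ENNReal.ofReal_coe_nnreal, ENNReal.ofReal_natCast, hc]
        push_cast
        ring
end
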